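/- arXiv:1105.1865 — 9 statements merged into one kernel-verified Lean document; each statement's English description precedes it below -/
import Mathlib

section
/- Let $E$ be a real inner product space, let $o, c \in E$, and let $0 < \omega_0 \le R$ be real numbers such that the closed ball of radius $\omega_0$ about $o$ is contained in the closed ball of radius $R$ about $c$. Then for every point $p$ with $\|p - c\| = R$ and $p \ne o$ one has $\langle p - c, p - o \rangle \ge \omega_0 \, \|p - o\|$; equivalently, the cosine of the angle at $p$ between the outer normal direction $(p-c)/R$ and the radial direction $(p-o)/\|p-o\|$ is at least $\omega_0 / R = \omega_0 k$, where $k = 1/R$. -/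
/-!
The chord of the sphere of radius `R = ‖p - c‖` about `c` that starts at `p` and runs through `o`
has length `2 * ⟪p - c, u⟫`, where `u = (p - o) / ‖p - o‖`. It reaches at least to the point of the
small ball farthest from `p`, so its length is at least `‖p - o‖ + ω₀`. Since `p` is not interior
to the large ball, it is not in the open ball of radius `ω₀` about `o`, so `‖p - o‖ ≥ ω₀` and the
chord has length at least `2 * ω₀`.
-/

open Metric

theorem le_dist_of_closedBall_subset_of_notMem_interior {X : Type*} [PseudoMetricSpace X]
    {s : Set X} {x y : X} {r : ℝ} (hs : closedBall x r ⊆ s) (hy : y ∉ interior s) :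
    r ≤ dist y x := by
  have hball : ball x r ⊆ interior s :=
    interior_maximal (ball_subset_closedBall.trans hs) isOpen_ball
  exact not_lt.mp fun hlt => hy (hball hlt)

section InnerProductSpace

variable {E : Type*} [NormedAddCommGroup E] [InnerProductSpace ℝ E] {o c p q : E} {r : ℝ}

theorem norm_sub_le_norm_sub_iff_norm_sub_sq_le_two_mul_inner :
    ‖q - c‖ ≤ ‖p - c‖ ↔ ‖p - q‖ ^ 2 ≤ 2 * inner ℝ (p - c) (p - q) := by
  have expansion := norm_sub_sq_real (p - c) (p - q)
  rw [sub_sub_sub_cancel_left] at expansion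
  rw [← sq_le_sq₀ (norm_nonneg _) (norm_nonneg _), expansion]
  constructor <;> intro h <;> linarith

theorem norm_sub_add_mul_norm_sub_le_two_mul_inner (hr : 0 ≤ r)
    (hball : closedBall o r ⊆ closedBall c ‖p - c‖) :
    (‖p - o‖ + r) * ‖p - o‖ ≤ 2 * inner ℝ (p - c) (p - o) := by
  rcases eq_or_ne p o with rfl | hpo
  · simp
  have hd : 0 < ‖p - o‖ := norm_sub_pos_iff.mpr hpo
  set t := r / ‖p - o‖
  have ht : 0 ≤ t := div_nonneg hr hd.le
  have htd : t * ‖p - o‖ = r := div_mul_cancel₀ r hd.ne'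
  let q := o - t • (p - o)
  have hq : q ∈ closedBall o r := by
    simp [q, norm_smul, abs_of_nonneg ht, htd]
  have hpq : p - q = (1 + t) • (p - o) := by
    simp only [q]
    module
  have hchord : ‖p - q‖ ^ 2 ≤ 2 * inner ℝ (p - c) (p - q) :=
    norm_sub_le_norm_sub_iff_norm_sub_sq_le_two_mul_inner.mp
      (mem_closedBall_iff_norm.mp (hball hq))
  rw [hpq, norm_smul, Real.norm_of_nonneg (by positivity), inner_smul_right] at hchord
  refine le_of_mul_le_mul_left ?_ (by positivity : 0 < 1 + t)
  calc (1 + t) * ((‖p - o‖ + r) * ‖p - o‖) = ((1 + t) * ‖p - o‖) ^ 2 := by rw [← htd]; ring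
    _ ≤ 2 * ((1 + t) * inner ℝ (p - c) (p - o)) := hchord
    _ = (1 + t) * (2 * inner ℝ (p - c) (p - o)) := by ring

end InnerProductSpace

/-- The angle lemma: if the closed ball of radius `ω₀` about `o` is contained in the
closed ball of radius `R` about `c`, then for every point `p` on the sphere of radius `R`
about `c` with `p ≠ o`, one has `⟪p - c, p - o⟫ ≥ ω₀ ‖p - o‖`. -/
theorem stmt_0 {E : Type*} [NormedAddCommGroup E] [InnerProductSpace ℝ E]
    (o c : E) (ω₀ R : ℝ) (hω₀ : 0 < ω₀) (hωR : ω₀ ≤ R)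
    (hball : Metric.closedBall o ω₀ ⊆ Metric.closedBall c R)
    (p : E) (hp : ‖p - c‖ = R) (hpo : p ≠ o) :
    ω₀ * ‖p - o‖ ≤ inner ℝ (p - c) (p - o) := by
  subst hp
  have hp_interior : p ∉ interior (closedBall c ‖p - c‖) := by
    rw [interior_closedBall c (hω₀.trans_le hωR).ne', mem_ball_iff_norm]
    exact lt_irrefl _
  have hdist : ω₀ ≤ ‖p - o‖ :=
    dist_eq_norm p o ▸ le_dist_of_closedBall_subset_of_notMem_interior hball hp_interior
  have hchord : (‖p - o‖ + ω₀) * ‖p - o‖ ≤ 2 * inner ℝ (p - c) (p - o) :=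
    norm_sub_add_mul_norm_sub_le_two_mul_inner hω₀.le hball
  have htwice : (ω₀ + ω₀) * ‖p - o‖ ≤ (‖p - o‖ + ω₀) * ‖p - o‖ := by gcongr
  linarith
end

section
/- Let $E$ be a real inner product space, let $o, c \in E$, and let $0 < \omega_0 \le R$ be real numbers such that the closed ball of radius $\omega_0$ about $o$ is contained in the closed ball of radius $R$ about $c$. Let $p$ satisfy $\|p - c\| = R$ and $p \ne o$, and let $\beta$ be the angle between $p - c$ and $p - o$, i.e. $\cos\beta = \langle p-c, p-o\rangle/(R\|p-o\|)$. Then $\cos\beta > 0$ and $\tan \beta \le \sqrt{R^2/\omega_0^2 - 1}$, i.e. with $k = 1/R$, $|\tan\beta| \le \sqrt{1/(k^2\omega_0^2) - 1}$. -/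
/-!
The point of the inner ball farthest from `c` shows that `o` lies at distance at most `R - ω₀`
from `c`. In the triangle `c`, `p`, `o` the law of sines then gives
`‖p - c‖ sin β ≤ ‖o - c‖ ≤ R - ω₀`. Since `‖o - c‖ < ‖p - c‖`, the angle `β` is acute, hence
`1 - cos β ≤ sin β`. Therefore `cos β ≥ ω₀ / R`, and the bound on the tangent follows
from `1 + tan² β = 1 / cos² β`.
-/

open InnerProductGeometry Metric

section NormedSpace

variable {E : Type*} [NormedAddCommGroup E] [NormedSpace ℝ E] [Nontrivial E]

theorem exists_sameRay_norm_eq (v : E) {r : ℝ} (hr : 0 ≤ r) :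
    ∃ w : E, SameRay ℝ v w ∧ ‖w‖ = r := by
  obtain rfl | hv := eq_or_ne v 0
  · obtain ⟨w, hw⟩ := exists_norm_eq E hr
    exact ⟨w, SameRay.zero_left w, hw⟩
  · refine ⟨(r / ‖v‖) • v, SameRay.sameRay_nonneg_smul_right v (by positivity), ?_⟩
    rw [norm_smul_of_nonneg (by positivity), div_mul_cancel₀ _ (norm_ne_zero_iff.mpr hv)]

theorem dist_add_le_of_closedBall_subset_closedBall {x y : E} {r s : ℝ} (hr : 0 ≤ r)
    (h : closedBall x r ⊆ closedBall y s) : dist x y + r ≤ s := by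
  obtain ⟨w, hray, hw⟩ := exists_sameRay_norm_eq (x - y) hr
  have hmem : x + w ∈ closedBall y s := h (by simp [hw])
  calc dist x y + r = ‖x - y + w‖ := by rw [hray.norm_add, hw, dist_eq_norm]
    _ = dist (x + w) y := by rw [dist_eq_norm, add_sub_right_comm]
    _ ≤ s := hmem

end NormedSpace

section Trigonometry

variable {θ : ℝ}

theorem one_sub_cos_le_sin (hcos : 0 ≤ Real.cos θ) (hsin : 0 ≤ Real.sin θ) :
    1 - Real.cos θ ≤ Real.sin θ := by
  nlinarith [Real.sin_sq_add_cos_sq θ, mul_nonneg hcos hsin]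

theorem tan_le_sqrt_inv_sq_sub_one {t : ℝ} (ht : 0 < t) (h : t ≤ Real.cos θ) :
    Real.tan θ ≤ √((t ^ 2)⁻¹ - 1) := by
  have hsec : 1 + Real.tan θ ^ 2 = (Real.cos θ ^ 2)⁻¹ := by
    rw [← Real.inv_one_add_tan_sq (ht.trans_le h).ne', inv_inv]
  have hinv : (Real.cos θ ^ 2)⁻¹ ≤ (t ^ 2)⁻¹ := by gcongr
  exact Real.le_sqrt_of_sq_le (by linarith)

end Trigonometry

section InnerProductSpace

variable {E : Type*} [NormedAddCommGroup E] [InnerProductSpace ℝ E]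

theorem cos_angle_nonneg_of_norm_sub_le {u v : E} (h : ‖u - v‖ ≤ ‖u‖) :
    0 ≤ Real.cos (angle u v) := by
  have hsq : ‖u - v‖ ^ 2 ≤ ‖u‖ ^ 2 := by gcongr
  have hinner : 0 ≤ inner ℝ u v := by
    linarith [norm_sub_sq_real u v, sq_nonneg ‖v‖]
  rw [cos_angle]
  positivity

theorem norm_mul_sin_angle_le_norm_sub (u v : E) : ‖u‖ * Real.sin (angle u v) ≤ ‖u - v‖ := by
  rw [mul_comm, sin_angle_mul_norm_eq_sin_angle_mul_norm]
  exact mul_le_of_le_one_left (norm_nonneg _) (Real.sin_le_one _)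

theorem norm_mul_one_sub_cos_angle_le_norm_sub {u v : E} (h : ‖u - v‖ ≤ ‖u‖) :
    ‖u‖ * (1 - Real.cos (angle u v)) ≤ ‖u - v‖ := by
  calc ‖u‖ * (1 - Real.cos (angle u v)) ≤ ‖u‖ * Real.sin (angle u v) := by
        gcongr
        exact one_sub_cos_le_sin (cos_angle_nonneg_of_norm_sub_le h) (sin_angle_nonneg u v)
    _ ≤ ‖u - v‖ := norm_mul_sin_angle_le_norm_sub u v

theorem le_mul_cos_angle_of_dist_add_le {o c p : E} {r R : ℝ} (hr : 0 ≤ r)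
    (hoc : dist o c + r ≤ R) (hp : R ≤ ‖p - c‖) :
    r ≤ R * Real.cos (angle (p - c) (p - o)) := by
  have hsub : ‖(p - c) - (p - o)‖ = dist o c := by
    rw [sub_sub_sub_cancel_left, dist_eq_norm]
  have hle : ‖(p - c) - (p - o)‖ ≤ ‖p - c‖ := by linarith
  have hone_sub : R * (1 - Real.cos (angle (p - c) (p - o))) ≤ dist o c := by
    calc R * (1 - Real.cos (angle (p - c) (p - o)))
        ≤ ‖p - c‖ * (1 - Real.cos (angle (p - c) (p - o))) :=
          mul_le_mul_of_nonneg_right hp (sub_nonneg.mpr (Real.cos_le_one _))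
      _ ≤ ‖(p - c) - (p - o)‖ := norm_mul_one_sub_cos_angle_le_norm_sub hle
      _ = dist o c := hsub
  linarith

theorem stmt_1_general {o c p : E} {ω₀ R : ℝ} (hω₀ : 0 < ω₀)
    (hball : closedBall o ω₀ ⊆ closedBall c R) (hp : R ≤ ‖p - c‖) (hpo : p ≠ o) :
    0 < Real.cos (angle (p - c) (p - o)) ∧
      Real.tan (angle (p - c) (p - o)) ≤ √(R ^ 2 / ω₀ ^ 2 - 1) := by
  have : Nontrivial E := ⟨p, o, hpo⟩
  have hoc : dist o c + ω₀ ≤ R := dist_add_le_of_closedBall_subset_closedBall hω₀.le hball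
  have hR : 0 < R := by linarith [dist_nonneg (x := o) (y := c)]
  have hcos : ω₀ / R ≤ Real.cos (angle (p - c) (p - o)) :=
    (div_le_iff₀' hR).mpr (le_mul_cos_angle_of_dist_add_le hω₀.le hoc hp)
  have hpos : 0 < ω₀ / R := div_pos hω₀ hR
  refine ⟨hpos.trans_le hcos, ?_⟩
  rw [← inv_div, ← div_pow]
  exact tan_le_sqrt_inv_sq_sub_one hpos hcos

end InnerProductSpace

/-- Bound on the angle `β` between the outer normal direction `p - c` and the radial
direction `p - o`: `cos β > 0` and `tan β ≤ √(R²/ω₀² - 1)`. -/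
theorem stmt_1 {E : Type*} [NormedAddCommGroup E] [InnerProductSpace ℝ E]
    (o c : E) (ω₀ R : ℝ) (hω₀ : 0 < ω₀) (hωR : ω₀ ≤ R)
    (hball : Metric.closedBall o ω₀ ⊆ Metric.closedBall c R)
    (p : E) (hp : ‖p - c‖ = R) (hpo : p ≠ o)
    (β : ℝ) (hβ : β = InnerProductGeometry.angle (p - c) (p - o)) :
    0 < Real.cos β ∧ Real.tan β ≤ Real.sqrt (R ^ 2 / ω₀ ^ 2 - 1) := by
  subst hβ
  exact stmt_1_general hω₀ hball hp.ge hpo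
end

section
/- With $f$, $t_+$, $t_-$ as in the context: $t_+(x) = 2\sqrt{x} - \tfrac{4}{3} f'''(0)\, x + O(x^{3/2})$ as $x \to 0^+$. -/
open Filter Topology Asymptotics

/-!
Put `c = √(f''(x₀) / 2)` and `v = c (t - x₀)`. Taylor's formula at the critical point `x₀` turns
`f t = f x₀ + s²` into `s² = v² + d v³ + O(v⁴)` with `d = f'''(x₀) / (6 c³)`. When `s` and `v` have
the same sign, `|s + v| ≥ |v|`, so the factor `s + v` of `s² - v²` can be divided out at the cost of
one power of `v`. A first division gives `s - v = O(v²)`, hence `s ~ v`, and a second one gives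
`v = s - (d / 2) s² + O(s³)`. The theorem is the case `s = √x`.
-/

section Taylor

variable {E : Type*} [NormedAddCommGroup E] [NormedSpace ℝ E] {f : ℝ → E} {x₀ : ℝ} {n : ℕ}

lemma isLittleO_sub_taylor_of_contDiffAt (hf : ContDiffAt ℝ n f x₀) :
    (fun x ↦ f x - ∑ k ∈ Finset.range (n + 1),
      ((k.factorial : ℝ)⁻¹ * (x - x₀) ^ k) • iteratedDeriv k f x₀)
      =o[𝓝 x₀] fun x ↦ (x - x₀) ^ n := by
  obtain ⟨u, hu, hfu⟩ := hf.contDiffOn (m := n) le_rfl (by simp)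
  obtain ⟨ε, hε, hball⟩ := Metric.mem_nhds_iff.1 hu
  have hx₀ : x₀ ∈ Metric.ball x₀ ε := Metric.mem_ball_self hε
  have h := taylor_isLittleO (convex_ball x₀ ε) hx₀ (hfu.mono hball)
  rw [Metric.isOpen_ball.nhdsWithin_eq hx₀] at h
  simpa only [taylor_within_apply, iteratedDerivWithin_of_isOpen Metric.isOpen_ball hx₀] using h

lemma isBigO_sub_taylor_of_contDiffAt (hf : ContDiffAt ℝ (n + 1) f x₀) :
    (fun x ↦ f x - ∑ k ∈ Finset.range (n + 1),
      ((k.factorial : ℝ)⁻¹ * (x - x₀) ^ k) • iteratedDeriv k f x₀)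
      =O[𝓝 x₀] fun x ↦ (x - x₀) ^ (n + 1) := by
  have hrem := (isLittleO_sub_taylor_of_contDiffAt (n := n + 1) (mod_cast hf)).isBigO
  have hlast : (fun x ↦ (((n + 1).factorial : ℝ)⁻¹ * (x - x₀) ^ (n + 1)) •
      iteratedDeriv (n + 1) f x₀) =O[𝓝 x₀] fun x ↦ (x - x₀) ^ (n + 1) := by
    simpa using ((isBigO_refl (fun x ↦ (x - x₀) ^ (n + 1)) (𝓝 x₀)).const_mul_left _).smul
      (isBigO_const_const (iteratedDeriv (n + 1) f x₀) (one_ne_zero' ℝ) (𝓝 x₀))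
  refine (hrem.add hlast).congr_left fun x ↦ ?_
  rw [Finset.sum_range_succ _ (n + 1)]
  abel

lemma isBigO_sub_cubic_taylor_of_deriv_eq_zero {f : ℝ → ℝ} (hf : ContDiffAt ℝ 4 f x₀)
    (hcrit : deriv f x₀ = 0) :
    (fun x ↦ f x - (f x₀ + deriv (deriv f) x₀ / 2 * (x - x₀) ^ 2 +
      deriv (deriv (deriv f)) x₀ / 6 * (x - x₀) ^ 3)) =O[𝓝 x₀] fun x ↦ (x - x₀) ^ 4 := by
  refine (isBigO_sub_taylor_of_contDiffAt (n := 3) (by norm_num; exact hf)).congr_left fun x ↦ ?_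
  simp only [Finset.sum_range_succ, Finset.sum_range_zero, iteratedDeriv_eq_iterate,
    Function.iterate_succ, Function.iterate_zero, Function.comp_apply, id_eq, hcrit,
    Nat.factorial, smul_eq_mul]
  push_cast
  ring

end Taylor

section SquareRoot

variable {α : Type*} {l : Filter α}

lemma isBigO_of_mul_isBigO_mul {𝕜 𝕜' : Type*} [NormedDivisionRing 𝕜] [NormedDivisionRing 𝕜']
    {f g : α → 𝕜} {h k : α → 𝕜'} (hfg : (fun x ↦ f x * g x) =O[l] fun x ↦ h x * k x)
    (hkg : k =O[l] g) (hk : ∀ᶠ x in l, k x ≠ 0) : f =O[l] h := by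
  have hg : ∀ᶠ x in l, g x ≠ 0 := by
    filter_upwards [hk, hkg.eq_zero_imp] with x hkx hgx using mt hgx hkx
  have hinv := hkg.inv_rev (hk.mono fun x hkx hzero ↦ absurd hzero hkx)
  refine (hfg.mul hinv).congr' ?_ ?_
  · filter_upwards [hg] with x hgx using mul_inv_cancel_right₀ hgx _
  · filter_upwards [hk] with x hkx using mul_inv_cancel_right₀ hkx _

variable {s v : α → ℝ}

lemma isBigO_add_of_mul_pos (hsv : ∀ᶠ x in l, 0 < s x * v x) :
    v =O[l] fun x ↦ s x + v x := by
  refine IsBigO.of_bound' (hsv.mono fun x hx ↦ sq_le_sq.1 ?_)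
  linarith [sq_nonneg (s x), add_sq (s x) (v x)]

lemma isBigO_of_mul_add_isBigO_pow_succ {e : α → ℝ} {n : ℕ} (hsv : ∀ᶠ x in l, 0 < s x * v x)
    (he : (fun x ↦ e x * (s x + v x)) =O[l] fun x ↦ v x ^ (n + 1)) :
    e =O[l] fun x ↦ v x ^ n :=
  isBigO_of_mul_isBigO_mul (by simpa only [pow_succ] using he) (isBigO_add_of_mul_pos hsv)
    (hsv.mono fun _ hx ↦ right_ne_zero_of_mul hx.ne')

lemma isBigO_sub_pow_of_sq_sub_sq {n : ℕ} (hsv : ∀ᶠ x in l, 0 < s x * v x)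
    (h : (fun x ↦ s x ^ 2 - v x ^ 2) =O[l] fun x ↦ v x ^ (n + 1)) :
    (fun x ↦ s x - v x) =O[l] fun x ↦ v x ^ n :=
  isBigO_of_mul_add_isBigO_pow_succ hsv (h.congr_left fun x ↦ by ring)

lemma isEquivalent_of_sub_isBigO_pow {n : ℕ} (hn : 1 < n) (hv : Tendsto v l (𝓝 0))
    (h : (fun x ↦ s x - v x) =O[l] fun x ↦ v x ^ n) : s ~[l] v :=
  h.trans_isLittleO ((isLittleO_pow_id hn).comp_tendsto hv)

lemma isBigO_sub_quadratic_of_sq_eq_cubic {d : ℝ} (hv : Tendsto v l (𝓝 0))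
    (hsv : ∀ᶠ x in l, 0 < s x * v x)
    (h : (fun x ↦ s x ^ 2 - (v x ^ 2 + d * v x ^ 3)) =O[l] fun x ↦ v x ^ 4) :
    (fun x ↦ v x - (s x - d / 2 * s x ^ 2)) =O[l] fun x ↦ s x ^ 3 := by
  have hv43 : (fun x ↦ v x ^ 4) =O[l] fun x ↦ v x ^ 3 :=
    ((isLittleO_pow_pow (by norm_num)).comp_tendsto hv).isBigO
  have hsq : (fun x ↦ s x ^ 2 - v x ^ 2) =O[l] fun x ↦ v x ^ 3 :=
    ((h.trans hv43).add ((isBigO_refl (fun x ↦ v x ^ 3) l).const_mul_left d)).congr_left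
      fun x ↦ by ring
  have hsub := isBigO_sub_pow_of_sq_sub_sq hsv hsq
  have hequiv := isEquivalent_of_sub_isBigO_pow one_lt_two hv hsub
  have hquad : (fun x ↦ s x ^ 2 + 2 * (s x * v x) + 2 * v x ^ 2) =O[l] fun x ↦ v x ^ 2 := by
    have hmul : (fun x ↦ s x * v x) =O[l] fun x ↦ v x ^ 2 := by
      simpa only [sq] using hequiv.isBigO.mul (isBigO_refl v l)
    exact ((hequiv.isBigO.pow 2).add (hmul.const_mul_left 2)).add
      ((isBigO_refl _ l).const_mul_left 2)
  have hprod : (fun x ↦ (s x - v x) * (s x ^ 2 + 2 * (s x * v x) + 2 * v x ^ 2))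
      =O[l] fun x ↦ v x ^ 4 := (hsub.mul hquad).congr_right fun x ↦ by ring
  have hfactor (x : α) : (v x - (s x - d / 2 * s x ^ 2)) * (s x + v x) =
      d / 2 * ((s x - v x) * (s x ^ 2 + 2 * (s x * v x) + 2 * v x ^ 2)) -
        (s x ^ 2 - (v x ^ 2 + d * v x ^ 3)) := by ring
  have herror : (fun x ↦ v x - (s x - d / 2 * s x ^ 2)) =O[l] fun x ↦ v x ^ 3 :=
    isBigO_of_mul_add_isBigO_pow_succ hsv
      (((hprod.const_mul_left (d / 2)).sub h).congr_left fun x ↦ (hfactor x).symm)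
  exact herror.trans (hequiv.isBigO_symm.pow 3)

end SquareRoot

/-- The sign condition on `s x * (t x - x₀)` selects the branch of the inverse of `f` near the
minimum `x₀`; negative `s` describes the branch to the left of `x₀`. -/
theorem isBigO_sub_quadratic_of_eq_add_sq {α : Type*} {l : Filter α} {f : ℝ → ℝ} {x₀ : ℝ}
    {s t : α → ℝ} (hf : ContDiffAt ℝ 4 f x₀) (hcrit : deriv f x₀ = 0)
    (hconv : 0 < deriv (deriv f) x₀) (ht : Tendsto t l (𝓝 x₀))
    (hst : ∀ᶠ x in l, 0 < s x * (t x - x₀)) (hfs : ∀ᶠ x in l, f (t x) = f x₀ + s x ^ 2) :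
    (fun x ↦ t x - (x₀ + √(2 / deriv (deriv f) x₀) * s x -
      deriv (deriv (deriv f)) x₀ / (3 * deriv (deriv f) x₀ ^ 2) * s x ^ 2))
      =O[l] fun x ↦ s x ^ 3 := by
  have htaylor := (isBigO_sub_cubic_taylor_of_deriv_eq_zero hf hcrit).comp_tendsto ht
  set κ := deriv (deriv f) x₀
  set a := deriv (deriv (deriv f)) x₀
  obtain ⟨c, hc, hκ⟩ : ∃ c > 0, κ = 2 * c ^ 2 :=
    ⟨√(κ / 2), by positivity, by rw [Real.sq_sqrt (by positivity)]; ring⟩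
  have hv : Tendsto (fun x ↦ c * (t x - x₀)) l (𝓝 0) := by
    simpa using (ht.sub_const x₀).const_mul c
  have hsv : ∀ᶠ x in l, 0 < s x * (c * (t x - x₀)) :=
    hst.mono fun x hx ↦ by linarith [mul_pos hc hx, mul_left_comm (s x) c (t x - x₀)]
  have hcubic : (fun x ↦ s x ^ 2 - ((c * (t x - x₀)) ^ 2 + a / (6 * c ^ 3) *
      (c * (t x - x₀)) ^ 3)) =O[l] fun x ↦ (c * (t x - x₀)) ^ 4 := by
    simp only [mul_pow c _ 4]
    refine IsBigO.const_mul_right (by positivity) (htaylor.congr' (hfs.mono fun x hx ↦ ?_) .rfl)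
    simp only [Function.comp_apply, hx, hκ]
    field
  have hsqrt : √(2 / κ) = c⁻¹ := by
    rw [show 2 / κ = c⁻¹ ^ 2 by rw [hκ]; field, Real.sqrt_sq (by positivity)]
  refine ((isBigO_sub_quadratic_of_sq_eq_cubic hv hsv hcubic).const_mul_left c⁻¹).congr_left
    fun x ↦ ?_
  rw [hsqrt, hκ]
  field

theorem stmt_4_general {f t : ℝ → ℝ} (hf : ContDiffAt ℝ 4 f 0) (hf0 : f 0 = 0)
    (hf1 : deriv f 0 = 0) (hf2 : 0 < deriv (deriv f) 0)
    (ht : ∀ᶠ x in 𝓝[>] (0 : ℝ), 0 < t x ∧ f (t x) = x) (ht0 : Tendsto t (𝓝[>] 0) (𝓝 0)) :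
    (fun x ↦ t x - (√(2 / deriv (deriv f) 0) * √x -
      deriv (deriv (deriv f)) 0 / (3 * deriv (deriv f) 0 ^ 2) * x))
      =O[𝓝[>] 0] fun x ↦ x ^ (3 / 2 : ℝ) := by
  have hpos : ∀ᶠ x in 𝓝[>] (0 : ℝ), 0 < x := self_mem_nhdsWithin
  have hbranch : ∀ᶠ x in 𝓝[>] (0 : ℝ), 0 < √x * (t x - 0) := by
    filter_upwards [hpos, ht] with x hx htx
    simpa only [sub_zero] using mul_pos (Real.sqrt_pos.2 hx) htx.1
  have hlevel : ∀ᶠ x in 𝓝[>] (0 : ℝ), f (t x) = f 0 + √x ^ 2 := by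
    filter_upwards [hpos, ht] with x hx htx
    rw [htx.2, hf0, zero_add, Real.sq_sqrt hx.le]
  refine (isBigO_sub_quadratic_of_eq_add_sq hf hf1 hf2 ht0 hbranch hlevel).congr' ?_ ?_
  · filter_upwards [hpos] with x hx
    rw [zero_add, Real.sq_sqrt hx.le]
  · filter_upwards [hpos] with x hx
    rw [Real.sqrt_eq_rpow, ← Real.rpow_mul_natCast hx.le]
    norm_num

theorem stmt_4 (f tp tm : ℝ → ℝ)
    (hf : ContDiffAt ℝ 4 f 0)
    (hf0 : f 0 = 0) (hf1 : deriv f 0 = 0) (hf2 : deriv (deriv f) 0 = 1/2)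
    (hfpos : ∀ᶠ t in 𝓝 (0:ℝ), 0 < deriv (deriv f) t)
    (htp : ∀ᶠ x in 𝓝[>] (0:ℝ), 0 < tp x ∧ f (tp x) = x)
    (htm : ∀ᶠ x in 𝓝[>] (0:ℝ), tm x < 0 ∧ f (tm x) = x)
    (htp0 : Tendsto tp (𝓝[>] (0:ℝ)) (𝓝 0))
    (htm0 : Tendsto tm (𝓝[>] (0:ℝ)) (𝓝 0)) :
    (fun x => tp x - (2 * Real.sqrt x - 4/3 * deriv (deriv (deriv f)) 0 * x))
      =O[𝓝[>] (0:ℝ)] fun x => x ^ (3/2 : ℝ) := by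
  have hsqrt : √(2 / (1 / 2) : ℝ) = 2 :=
    (Real.sqrt_eq_iff_mul_self_eq_of_pos two_pos).2 (by norm_num)
  refine (stmt_4_general hf hf0 hf1 hfpos.self_of_nhds htp htp0).congr_left fun x ↦ ?_
  rw [hf2, hsqrt]
  ring
end

section
/- With $f$, $t_+$, $t_-$ as in the context: $t_-(x) = -2\sqrt{x} - \tfrac{4}{3} f'''(0)\, x + O(x^{3/2})$ as $x \to 0^+$. -/
open Filter Topology Asymptotics

/-!
By Taylor's theorem `g = 2 f / f''(0)` satisfies `g(t) = t² + 2 b t³ + O(t⁴)` for some `b`, and the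
right-hand side is `(t + b t²)² + O(t⁴)`. For `t < 0` this gives `√g(t) = -(t + b t²) + O(t³)`.
Since also `t² = g(t) + O(t³)`, we get `t = -√g(t) - b g(t) + O(t³)`, and it remains to substitute
`t = t₋(x)`, where `g(t)` is a multiple of `x` and `t³ = O(x^{3/2})`.
-/

theorem isBigO_sub_taylor {E : Type*} [NormedAddCommGroup E] [NormedSpace ℝ E] {f : ℝ → E} {x₀ : ℝ}
    {n : ℕ} (hf : ContDiffAt ℝ (n + 1 : ℕ) f x₀) :
    (fun x => f x - ∑ k ∈ Finset.range (n + 1),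
      ((k.factorial : ℝ)⁻¹ * (x - x₀) ^ k) • iteratedDeriv k f x₀)
      =O[𝓝 x₀] fun x => (x - x₀) ^ (n + 1) := by
  obtain ⟨u, hu, hfu⟩ := hf.contDiffOn le_rfl (by simp)
  obtain ⟨ε, hε, hball⟩ := Metric.mem_nhds_iff.1 (by simpa using hu : u ∈ 𝓝 x₀)
  have hx₀ : x₀ ∈ Metric.ball x₀ ε := Metric.mem_ball_self hε
  have hnext := taylor_isLittleO (convex_ball x₀ ε) hx₀ (hfu.mono hball)
  rw [nhdsWithin_eq_nhds.2 (Metric.ball_mem_nhds x₀ hε)] at hnext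
  have hlast : (fun x => (((n + 1).factorial : ℝ)⁻¹ * (x - x₀) ^ (n + 1)) •
      iteratedDeriv (n + 1) f x₀) =O[𝓝 x₀] fun x => (x - x₀) ^ (n + 1) := by
    simpa using ((isBigO_refl (fun x => (x - x₀) ^ (n + 1)) (𝓝 x₀)).const_mul_left
      ((n + 1).factorial : ℝ)⁻¹).smul (isBigO_const_const (iteratedDeriv (n + 1) f x₀)
        (one_ne_zero (α := ℝ)) (𝓝 x₀))
  refine (hnext.isBigO.add hlast).congr_left fun x => ?_
  rw [taylor_within_apply, Finset.sum_range_succ _ (n + 1),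
    iteratedDerivWithin_of_isOpen Metric.isOpen_ball hx₀,
    Finset.sum_congr rfl fun k _ => by rw [iteratedDerivWithin_of_isOpen Metric.isOpen_ball hx₀]]
  abel

theorem isBigO_sub_cubic_of_deriv_eq_zero {f : ℝ → ℝ} (hf : ContDiffAt ℝ 4 f 0)
    (hf0 : f 0 = 0) (hf1 : deriv f 0 = 0) :
    (fun t => f t - (deriv (deriv f) 0 / 2 * t ^ 2 + deriv (deriv (deriv f)) 0 / 6 * t ^ 3))
      =O[𝓝 0] fun t => t ^ 4 := by
  have h := isBigO_sub_taylor (n := 3) hf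
  simp only [Finset.sum_range_succ, Finset.sum_range_zero, iteratedDeriv_succ, iteratedDeriv_zero,
    hf0, hf1, Nat.factorial, sub_zero, smul_eq_mul] at h
  refine h.congr_left fun t => ?_
  push_cast
  ring

theorem abs_sqrt_sub_mul_le {y v : ℝ} (hv : 0 ≤ v) : |√y - v| * v ≤ |y - v ^ 2| := by
  rcases le_total 0 y with hy | hy
  · calc |√y - v| * v ≤ |√y - v| * (√y + v) := by gcongr; linarith [Real.sqrt_nonneg y]
      _ = |(√y - v) * (√y + v)| := by rw [abs_mul, abs_of_nonneg (a := √y + v) (by positivity)]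
      _ = |y - v ^ 2| := by rw [mul_comm, ← sq_sub_sq, Real.sq_sqrt hy]
  · rw [Real.sqrt_eq_zero_of_nonpos hy, zero_sub, abs_neg, abs_of_nonneg hv,
      abs_of_nonpos (by nlinarith)]
    linarith

theorem isBigO_sqrt_sub_of_sub_sq {α : Type*} {l : Filter α} {g v w : α → ℝ}
    (hv : ∀ᶠ a in l, 0 < v a) (h : (fun a => g a - v a ^ 2) =O[l] fun a => w a * v a) :
    (fun a => √(g a) - v a) =O[l] w := by
  obtain ⟨C, hC⟩ := h.bound
  refine .of_bound C ?_
  filter_upwards [hv, hC] with a hva hCa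
  refine le_of_mul_le_mul_right ?_ hva
  calc ‖√(g a) - v a‖ * v a ≤ ‖g a - v a ^ 2‖ := abs_sqrt_sub_mul_le hva.le
    _ ≤ C * ‖w a * v a‖ := hCa
    _ = C * ‖w a‖ * v a := by rw [norm_mul, Real.norm_of_nonneg hva.le, mul_assoc]

section CubicExpansion

variable {l : Filter ℝ} {g : ℝ → ℝ} {b : ℝ}

theorem isBigO_sub_sq_of_cubic (hl : l ≤ 𝓝 0)
    (hg : (fun t => g t - (t ^ 2 + 2 * b * t ^ 3)) =O[l] fun t => t ^ 4) :
    (fun t => g t - t ^ 2) =O[l] fun t => t ^ 3 := by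
  have hfourth : (fun t : ℝ => t ^ 4) =O[l] fun t => t ^ 3 :=
    ((isLittleO_pow_pow (by norm_num)).mono hl).isBigO
  have hcube : (fun t : ℝ => 2 * b * t ^ 3) =O[l] fun t => t ^ 3 :=
    (isBigO_refl _ _).const_mul_left _
  exact ((hg.trans hfourth).add hcube).congr_left fun t => by ring

theorem isBigO_sq_of_cubic (hl : l ≤ 𝓝 0)
    (hg : (fun t => g t - (t ^ 2 + 2 * b * t ^ 3)) =O[l] fun t => t ^ 4) :
    (fun t => t ^ 2) =O[l] g := by
  have hlittle : (fun t : ℝ => t ^ 3) =o[l] fun t => t ^ 2 :=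
    (isLittleO_pow_pow (by norm_num)).mono hl
  have hequiv : g ~[l] fun t => t ^ 2 := (isBigO_sub_sq_of_cubic hl hg).trans_isLittleO hlittle
  exact hequiv.symm.isBigO

theorem isBigO_sqrt_add_of_cubic
    (hg : (fun t => g t - (t ^ 2 + 2 * b * t ^ 3)) =O[𝓝[<] 0] fun t => t ^ 4) :
    (fun t => √(g t) + (t + b * t ^ 2)) =O[𝓝[<] 0] fun t => t ^ 3 := by
  have hhalf : ∀ᶠ t in 𝓝[<] (0 : ℝ), 1 / 2 < 1 + b * t := by
    have hlim : Tendsto (fun t : ℝ => 1 + b * t) (𝓝 0) (𝓝 1) :=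
      Continuous.tendsto' (by fun_prop) _ _ (by simp)
    exact nhdsWithin_le_nhds (hlim.eventually_const_lt (by norm_num))
  have hpos : ∀ᶠ t in 𝓝[<] (0 : ℝ), 0 < -(t + b * t ^ 2) := by
    filter_upwards [hhalf, self_mem_nhdsWithin] with t ht (ht0 : t < 0)
    nlinarith
  have hlin : (fun t : ℝ => t) =O[𝓝[<] 0] fun t => -(t + b * t ^ 2) := by
    refine .of_bound 2 ?_
    filter_upwards [hhalf, hpos, self_mem_nhdsWithin] with t ht hv (ht0 : t < 0)
    rw [Real.norm_of_nonpos ht0.le, Real.norm_of_nonneg hv.le]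
    nlinarith
  have hfourth : (fun t : ℝ => t ^ 4) =O[𝓝[<] 0] fun t => t ^ 3 * -(t + b * t ^ 2) :=
    (isBigO_refl (fun t : ℝ => t ^ 3) _).mul hlin
  have hsquare : (fun t => g t - (-(t + b * t ^ 2)) ^ 2) =O[𝓝[<] 0] fun t => t ^ 4 :=
    (hg.sub ((isBigO_refl (fun t : ℝ => t ^ 4) _).const_mul_left (b ^ 2))).congr_left
      fun t => by ring
  simpa only [sub_neg_eq_add] using isBigO_sqrt_sub_of_sub_sq hpos (hsquare.trans hfourth)

theorem isBigO_sub_neg_sqrt_of_cubic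
    (hg : (fun t => g t - (t ^ 2 + 2 * b * t ^ 3)) =O[𝓝[<] 0] fun t => t ^ 4) :
    (fun t => t - (-√(g t) - b * g t)) =O[𝓝[<] 0] fun t => t ^ 3 :=
  ((isBigO_sqrt_add_of_cubic hg).add
    ((isBigO_sub_sq_of_cubic nhdsWithin_le_nhds hg).const_mul_left b)).congr_left fun t => by ring

end CubicExpansion

theorem isBigO_cube_rpow_of_sq {α : Type*} {l : Filter α} {u x : α → ℝ} (hx : ∀ᶠ a in l, 0 ≤ x a)
    (h : (fun a => u a ^ 2) =O[l] x) :
    (fun a => u a ^ 3) =O[l] fun a => x a ^ (3 / 2 : ℝ) := by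
  have hcube (y : ℝ) : (y ^ 2) ^ (3 / 2 : ℝ) = ‖y ^ 3‖ := by
    rw [← sq_abs, ← Real.rpow_natCast_mul (abs_nonneg y), norm_pow, Real.norm_eq_abs]
    norm_num
  exact ((h.rpow (by norm_num) hx).congr_left fun a => hcube (u a)).of_norm_left

theorem stmt_5_general (f tm : ℝ → ℝ) (hf : ContDiffAt ℝ 4 f 0)
    (hf0 : f 0 = 0) (hf1 : deriv f 0 = 0) (hf2 : 0 < deriv (deriv f) 0)
    (htm : ∀ᶠ x in 𝓝[>] (0 : ℝ), tm x < 0 ∧ f (tm x) = x)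
    (htm0 : Tendsto tm (𝓝[>] (0 : ℝ)) (𝓝 0)) :
    (fun x => tm x - (-√(2 * x / deriv (deriv f) 0)
      - deriv (deriv (deriv f)) 0 / (3 * deriv (deriv f) 0 ^ 2) * x))
      =O[𝓝[>] (0 : ℝ)] fun x => x ^ (3 / 2 : ℝ) := by
  set A := deriv (deriv f) 0
  set c := deriv (deriv (deriv f)) 0
  have hcubic : (fun t => 2 * f t / A - (t ^ 2 + 2 * (c / (6 * A)) * t ^ 3))
      =O[𝓝[<] 0] fun t => t ^ 4 := by
    refine (((isBigO_sub_cubic_of_deriv_eq_zero hf hf0 hf1).const_mul_left (2 / A)).mono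
      nhdsWithin_le_nhds).congr_left fun t => ?_
    field
  have htm_left : Tendsto tm (𝓝[>] 0) (𝓝[<] 0) :=
    tendsto_nhdsWithin_iff.2 ⟨htm0, htm.mono fun _ hx => hx.1⟩
  have hroot : ∀ᶠ x in 𝓝[>] (0 : ℝ), f (tm x) = x := htm.mono fun _ hx => hx.2
  have hsq : (fun x => tm x ^ 2) =O[𝓝[>] 0] fun x => x := by
    have hf_sq : (fun t => t ^ 2) =O[𝓝[<] 0] f :=
      (isBigO_sq_of_cubic nhdsWithin_le_nhds hcubic).trans
        (((isBigO_refl f _).const_mul_left (2 / A)).congr_left fun t => by ring)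
    exact (hf_sq.comp_tendsto htm_left).congr' .rfl hroot
  have hexpand := (isBigO_sub_neg_sqrt_of_cubic hcubic).comp_tendsto htm_left
  refine (hexpand.congr' ?_ .rfl).trans
    (isBigO_cube_rpow_of_sq (eventually_mem_nhdsWithin.mono fun _ hx => le_of_lt hx) hsq)
  filter_upwards [hroot] with x hx
  simp only [Function.comp_apply, hx]
  field

theorem stmt_5 (f tp tm : ℝ → ℝ)
    (hf : ContDiffAt ℝ 4 f 0)
    (hf0 : f 0 = 0) (hf1 : deriv f 0 = 0) (hf2 : deriv (deriv f) 0 = 1/2)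
    (hfpos : ∀ᶠ t in 𝓝 (0:ℝ), 0 < deriv (deriv f) t)
    (htp : ∀ᶠ x in 𝓝[>] (0:ℝ), 0 < tp x ∧ f (tp x) = x)
    (htm : ∀ᶠ x in 𝓝[>] (0:ℝ), tm x < 0 ∧ f (tm x) = x)
    (htp0 : Tendsto tp (𝓝[>] (0:ℝ)) (𝓝 0))
    (htm0 : Tendsto tm (𝓝[>] (0:ℝ)) (𝓝 0)) :
    (fun x => tm x - (-2 * Real.sqrt x - 4/3 * deriv (deriv (deriv f)) 0 * x))
      =O[𝓝[>] (0:ℝ)] fun x => x ^ (3/2 : ℝ) := by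
  have hsqrt (x : ℝ) : √(2 * x / (1 / 2)) = 2 * √x := by
    rw [show 2 * x / (1 / 2) = 2 ^ 2 * x by ring, Real.sqrt_mul (by positivity)]
    simp
  refine (stmt_5_general f tm hf hf0 hf1 (by linarith) htm htm0).congr_left fun x => ?_
  rw [hf2, hsqrt]
  ring
end

section
/- With $f$, $t_+$, $t_-$ as in the context: $\tfrac{1}{2}\Big(\tfrac{1}{t_+(x)} - \tfrac{1}{t_-(x)}\Big) = \tfrac{1}{2\sqrt{x}} + O(\sqrt{x})$ as $x \to 0^+$. (This quantity is the value $F((0,x),(1,0))$ of the Hilbert metric in the horizontal direction.) -/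
open Filter Topology Asymptotics

/-!
Put `s = √x` on the branch `t = tp x` and `s = -√x` on the branch `t = tm x`, so that `s` has the
sign of `t` and `s ^ 2 = f t`. With `f t = c t² + a t³ + O(t⁴)` this gives
`(s / t) ^ 2 = c + a t + O(t²)`, and raising to the power `-1/2` yields
`1 / t = √c / s + a / (2 c) + O(s)` on both branches with the same constant term. That term cancels
in `1 / tp x - 1 / tm x`, while the leading terms add up.
-/

section Taylor

variable {E : Type*} [NormedAddCommGroup E] [NormedSpace ℝ E]

lemma taylor_isBigO {f : ℝ → E} {x₀ : ℝ} {n : ℕ} (hf : ContDiffAt ℝ n f x₀) :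
    (fun x => f x - ∑ k ∈ Finset.range n,
        ((k.factorial : ℝ)⁻¹ * (x - x₀) ^ k) • iteratedDeriv k f x₀)
      =O[𝓝 x₀] fun x => (x - x₀) ^ n := by
  obtain ⟨ε, hε, hball⟩ := Metric.eventually_nhds_iff_ball.1 (hf.eventually (by simp))
  have hx₀ : x₀ ∈ Metric.ball x₀ ε := Metric.mem_ball_self hε
  have hderiv (k : ℕ) : iteratedDerivWithin k f (Metric.ball x₀ ε) x₀ = iteratedDeriv k f x₀ :=
    iteratedDerivWithin_of_isOpen Metric.isOpen_ball hx₀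
  have hlittle := taylor_isLittleO (convex_ball x₀ ε) hx₀
    fun y hy => (hball y hy).contDiffWithinAt
  rw [nhdsWithin_eq_nhds.2 (Metric.ball_mem_nhds x₀ hε)] at hlittle
  simp only [taylor_within_apply, Finset.sum_range_succ, hderiv] at hlittle
  have htop : (fun x => ((n.factorial : ℝ)⁻¹ * (x - x₀) ^ n) • iteratedDeriv n f x₀)
      =O[𝓝 x₀] fun x => (x - x₀) ^ n := by
    simpa using ((isBigO_refl (fun x => (x - x₀) ^ n) (𝓝 x₀)).const_mul_left
      (n.factorial : ℝ)⁻¹).smul (tendsto_const_nhds.isBigO_one ℝ)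
  exact (hlittle.isBigO.add htop).congr_left fun x => by abel

lemma taylor_isBigO_of_deriv_eq_zero {f : ℝ → ℝ} {x₀ : ℝ} (hf : ContDiffAt ℝ 4 f x₀)
    (hderiv : deriv f x₀ = 0) :
    (fun x => f x - (f x₀ + deriv (deriv f) x₀ / 2 * (x - x₀) ^ 2
        + iteratedDeriv 3 f x₀ / 6 * (x - x₀) ^ 3))
      =O[𝓝 x₀] fun x => (x - x₀) ^ 4 := by
  have htwo : iteratedDeriv 2 f x₀ = deriv (deriv f) x₀ := by
    rw [iteratedDeriv_succ, iteratedDeriv_one]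
  refine (taylor_isBigO (n := 4) hf).congr_left fun x => ?_
  simp only [Finset.sum_range_succ, Finset.sum_range_zero, iteratedDeriv_zero, iteratedDeriv_one,
    htwo, hderiv, Nat.factorial, smul_eq_mul]
  push_cast
  ring

lemma isBigO_comp_sub_affine {α : Type*} {l : Filter α} {φ : ℝ → E} {q t : α → ℝ} {a c : ℝ}
    (hφ : ContDiffAt ℝ 2 φ c) (ht : Tendsto t l (𝓝 0))
    (hq : (fun x => q x - (c + a * t x)) =O[l] fun x => t x ^ 2) :
    (fun x => φ (q x) - (φ c + (a * t x) • deriv φ c)) =O[l] fun x => t x ^ 2 := by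
  have hsq : (fun x => t x ^ 2) =O[l] t := by
    simpa [pow_two] using (ht.isBigO_one ℝ).mul (isBigO_refl t l)
  have hlin : (fun x => q x - c) =O[l] t :=
    ((hq.trans hsq).add ((isBigO_refl t l).const_mul_left a)).congr_left fun x => by ring
  have hqc : Tendsto q l (𝓝 c) := tendsto_sub_nhds_zero_iff.1 (hlin.trans_tendsto ht)
  have htaylor : (fun x => φ (q x) - (φ c + (q x - c) • deriv φ c)) =O[l] fun x => t x ^ 2 := by
    refine IsBigO.trans ?_ (hlin.pow 2)
    simpa [Function.comp_def, Finset.sum_range_succ] using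
      (taylor_isBigO (n := 2) hφ).comp_tendsto hqc
  have hslope : (fun x => (q x - (c + a * t x)) • deriv φ c) =O[l] fun x => t x ^ 2 := by
    simpa using hq.smul ((tendsto_const_nhds (x := deriv φ c)).isBigO_one ℝ)
  exact (htaylor.add hslope).congr_left fun x => by module

end Taylor

section Branch

variable {α : Type*} {l : Filter α} {s t : α → ℝ} {a c : ℝ}

lemma isBigO_inv_sqrt_sub_affine {q : α → ℝ} (hc : 0 < c) (ht : Tendsto t l (𝓝 0))
    (hq : (fun x => q x - (c + a * t x)) =O[l] fun x => t x ^ 2) :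
    (fun x => (√(q x))⁻¹ - ((√c)⁻¹ - a / (2 * c * √c) * t x)) =O[l] fun x => t x ^ 2 := by
  have hsqrt : √c ≠ 0 := (Real.sqrt_pos.2 hc).ne'
  have hderiv : deriv (fun u => (√u)⁻¹) c = -(1 / (2 * c * √c)) := by
    rw [((Real.hasDerivAt_sqrt hc.ne').fun_inv hsqrt).deriv, Real.sq_sqrt hc.le]
    field_simp
  have hsmooth : ContDiffAt ℝ 2 (fun u => (√u)⁻¹) c := (Real.contDiffAt_sqrt hc.ne').inv hsqrt
  refine (isBigO_comp_sub_affine hsmooth ht hq).congr_left fun x => ?_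
  rw [hderiv, smul_eq_mul]
  ring

lemma isBigO_div_sub_affine (hc : 0 < c) (ht : Tendsto t l (𝓝 0))
    (hsign : ∀ᶠ x in l, 0 < s x * t x)
    (hs : (fun x => s x ^ 2 - (c * t x ^ 2 + a * t x ^ 3)) =O[l] fun x => t x ^ 4) :
    (fun x => t x / s x - ((√c)⁻¹ - a / (2 * c * √c) * t x)) =O[l] fun x => t x ^ 2 := by
  have hratio : (fun x => (s x / t x) ^ 2 - (c + a * t x)) =O[l] fun x => t x ^ 2 := by
    refine (hs.mul (isBigO_refl (fun x => (t x ^ 2)⁻¹) l)).congr' ?_ ?_ <;>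
    · filter_upwards [hsign] with x hx
      have := right_ne_zero_of_mul hx.ne'
      field_simp
  refine (isBigO_inv_sqrt_sub_affine hc ht hratio).congr' ?_ .rfl
  filter_upwards [hsign] with x hx
  have hpos : 0 < s x / t x := by rwa [div_pos_iff, ← mul_pos_iff]
  rw [Real.sqrt_sq hpos.le, inv_div]

lemma isBigO_one_div_sub_sqrt_div (hc : 0 < c) (ht : Tendsto t l (𝓝 0))
    (hsign : ∀ᶠ x in l, 0 < s x * t x)
    (hs : (fun x => s x ^ 2 - (c * t x ^ 2 + a * t x ^ 3)) =O[l] fun x => t x ^ 4) :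
    (fun x => 1 / t x - (√c / s x + a / (2 * c))) =O[l] s := by
  have hratio := isBigO_div_sub_affine hc ht hsign hs
  have hbounded : (fun x => t x / s x) =O[l] fun _ => (1 : ℝ) := by
    have haffine : Tendsto (fun x => (√c)⁻¹ - a / (2 * c * √c) * t x) l (𝓝 _) :=
      (ht.const_mul _).const_sub _
    simpa using (hratio.trans ((ht.pow 2).isBigO_one ℝ)).add (haffine.isBigO_one ℝ)
  have hts : t =O[l] s := by
    refine (hbounded.mul (isBigO_refl s l)).congr' ?_ (.of_eq (by simp))
    filter_upwards [hsign] with x hx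
    exact div_mul_cancel₀ _ (left_ne_zero_of_mul hx.ne')
  refine IsBigO.trans ?_ hts
  refine ((hratio.mul (isBigO_refl (fun x => (t x)⁻¹) l)).const_mul_left (-√c)).congr' ?_ ?_
  · filter_upwards [hsign] with x hx
    have := left_ne_zero_of_mul hx.ne'
    have := right_ne_zero_of_mul hx.ne'
    have := (Real.sqrt_pos.2 hc).ne'
    field_simp
    ring
  · filter_upwards [hsign] with x hx
    have := right_ne_zero_of_mul hx.ne'
    field_simp

end Branch

theorem stmt_6_general {f tp tm : ℝ → ℝ} {a c : ℝ} (hc : 0 < c)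
    (hf : (fun t => f t - (c * t ^ 2 + a * t ^ 3)) =O[𝓝 0] fun t => t ^ 4)
    (htp : ∀ᶠ x in 𝓝[>] (0 : ℝ), 0 < tp x ∧ f (tp x) = x)
    (htm : ∀ᶠ x in 𝓝[>] (0 : ℝ), tm x < 0 ∧ f (tm x) = x)
    (htp0 : Tendsto tp (𝓝[>] (0 : ℝ)) (𝓝 0))
    (htm0 : Tendsto tm (𝓝[>] (0 : ℝ)) (𝓝 0)) :
    (fun x => 1 / 2 * (1 / tp x - 1 / tm x) - √c / √x) =O[𝓝[>] (0 : ℝ)] fun x => √x := by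
  have hpos : ∀ᶠ x in 𝓝[>] (0 : ℝ), 0 < x := self_mem_nhdsWithin
  have hplus : (fun x => 1 / tp x - (√c / √x + a / (2 * c))) =O[𝓝[>] (0 : ℝ)] fun x => √x := by
    refine isBigO_one_div_sub_sqrt_div hc htp0 ?_ ((hf.comp_tendsto htp0).congr' ?_ .rfl)
    · filter_upwards [htp, hpos] with x ⟨htx, _⟩ hx using mul_pos (Real.sqrt_pos.2 hx) htx
    · filter_upwards [htp, hpos] with x ⟨_, hfx⟩ hx
      simp only [Function.comp_apply, hfx, Real.sq_sqrt hx.le]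
  have hminus : (fun x => 1 / tm x - (√c / -√x + a / (2 * c))) =O[𝓝[>] (0 : ℝ)] fun x => -√x := by
    refine isBigO_one_div_sub_sqrt_div hc htm0 ?_ ((hf.comp_tendsto htm0).congr' ?_ .rfl)
    · filter_upwards [htm, hpos] with x ⟨htx, _⟩ hx
      exact mul_pos_of_neg_of_neg (neg_neg_of_pos (Real.sqrt_pos.2 hx)) htx
    · filter_upwards [htm, hpos] with x ⟨_, hfx⟩ hx
      simp only [Function.comp_apply, hfx, neg_sq, Real.sq_sqrt hx.le]
  refine ((hplus.sub hminus.of_neg_right).const_mul_left (1 / 2)).congr_left fun x => ?_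
  rw [div_neg]
  ring

theorem stmt_6 (f tp tm : ℝ → ℝ)
    (hf : ContDiffAt ℝ 4 f 0)
    (hf0 : f 0 = 0) (hf1 : deriv f 0 = 0) (hf2 : deriv (deriv f) 0 = 1/2)
    (hfpos : ∀ᶠ t in 𝓝 (0:ℝ), 0 < deriv (deriv f) t)
    (htp : ∀ᶠ x in 𝓝[>] (0:ℝ), 0 < tp x ∧ f (tp x) = x)
    (htm : ∀ᶠ x in 𝓝[>] (0:ℝ), tm x < 0 ∧ f (tm x) = x)
    (htp0 : Tendsto tp (𝓝[>] (0:ℝ)) (𝓝 0))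
    (htm0 : Tendsto tm (𝓝[>] (0:ℝ)) (𝓝 0)) :
    (fun x => 1/2 * (1 / tp x - 1 / tm x) - 1 / (2 * Real.sqrt x))
      =O[𝓝[>] (0:ℝ)] fun x => Real.sqrt x := by
  have hexpansion := taylor_isBigO_of_deriv_eq_zero hf hf1
  simp only [hf0, hf2, sub_zero, zero_add] at hexpansion
  have hsqrt : √(1 / 2 / 2 : ℝ) = 1 / 2 := by
    rw [Real.sqrt_eq_iff_mul_self_eq] <;> norm_num
  refine (stmt_6_general (by norm_num) hexpansion htp htm htp0 htm0).congr_left fun x => ?_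
  rw [hsqrt, div_div]
end

section
/- With $f$, $t_+$, $t_-$ as in the context: $\tfrac{1}{t_+(x)} + \tfrac{1}{t_-(x)} = \tfrac{2}{3} f'''(0) + O(\sqrt{x})$ as $x \to 0^+$. (This quantity is the difference of Funk metrics $\Theta((0,x),(1,0)) - \Theta((0,x),(-1,0))$.) -/
open Filter Topology Asymptotics

open scoped Nat

/-! Write `f t = a t² + b t³ + O(t⁴)` with `a > 0`, so that `y = f t / (a t²)` equals
`1 + (b / a) t + O(t²)`. Since `1 / √y = 1 - (y - 1) / 2 + O((y - 1)²)` near `1`, dividing by `t`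
gives `1 / t = sign t * √(a / f t) + b / (2 a) + O(t)`. On the two branches of `f t = x` the
singular terms `± √(a / x)` cancel, the constants add up to `b / a`, and `t = O(√x)`. -/

section Taylor

variable {E : Type*} [NormedAddCommGroup E] [NormedSpace ℝ E]

lemma taylor_isBigO_of_contDiffAt {f : ℝ → E} {x₀ : ℝ} {n : ℕ} (hf : ContDiffAt ℝ (n + 1) f x₀) :
    (fun x ↦ f x - ∑ k ∈ Finset.range (n + 1), ((k ! : ℝ)⁻¹ * (x - x₀) ^ k) • iteratedDeriv k f x₀)
      =O[𝓝 x₀] fun x ↦ (x - x₀) ^ (n + 1) := by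
  obtain ⟨U, hU, hfU⟩ := hf.contDiffOn le_rfl (by simp)
  obtain ⟨r, hr, hrU⟩ := Metric.mem_nhds_iff.1 (show U ∈ 𝓝 x₀ by simpa using hU)
  have hx₀ : x₀ ∈ Metric.ball x₀ r := Metric.mem_ball_self hr
  have hremainder : (fun x ↦ f x - taylorWithinEval f (n + 1) (Metric.ball x₀ r) x₀ x)
      =o[𝓝 x₀] fun x ↦ (x - x₀) ^ (n + 1) := by
    simpa only [Metric.isOpen_ball.nhdsWithin_eq hx₀] using
      taylor_isLittleO (n := n + 1) (convex_ball x₀ r) hx₀ (mod_cast hfU.mono hrU)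
  have hlast : (fun x ↦ (((n + 1)! : ℝ)⁻¹ * (x - x₀) ^ (n + 1)) • iteratedDeriv (n + 1) f x₀)
      =O[𝓝 x₀] fun x ↦ (x - x₀) ^ (n + 1) :=
    .of_bound ‖((n + 1)! : ℝ)⁻¹ • iteratedDeriv (n + 1) f x₀‖ <| .of_forall fun x ↦ by
      rw [mul_comm, mul_smul, norm_smul, mul_comm]
  refine (hremainder.isBigO.add hlast).congr_left fun x ↦ ?_
  simp only [taylor_within_apply, iteratedDerivWithin_of_isOpen Metric.isOpen_ball hx₀,
    Finset.sum_range_succ _ (n + 1)]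
  abel

end Taylor

lemma cubic_expansion_of_contDiffAt {f : ℝ → ℝ} (hf : ContDiffAt ℝ 4 f 0) (hf0 : f 0 = 0)
    (hf1 : deriv f 0 = 0) :
    (fun t ↦ f t - (deriv (deriv f) 0 / 2 * t ^ 2 + deriv (deriv (deriv f)) 0 / 6 * t ^ 3))
      =O[𝓝 0] fun t ↦ t ^ 4 := by
  have htaylor := taylor_isBigO_of_contDiffAt (n := 3) (by exact_mod_cast hf)
  simp only [sub_zero] at htaylor
  refine htaylor.congr_left fun t ↦ ?_
  simp only [Finset.sum_range_succ, Finset.sum_range_zero, iteratedDeriv_succ, iteratedDeriv_zero,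
    hf0, hf1, Nat.factorial, smul_eq_mul]
  push_cast
  ring

lemma inv_sqrt_sub_linear_isBigO :
    (fun y : ℝ ↦ (√y)⁻¹ - (1 - (y - 1) / 2)) =O[𝓝 1] fun y ↦ (y - 1) ^ 2 := by
  have hsmooth : ContDiffAt ℝ (1 + 1) (fun y : ℝ ↦ (√y)⁻¹) 1 :=
    (Real.contDiffAt_sqrt one_ne_zero).inv (by simp)
  have hderiv : deriv (fun y : ℝ ↦ (√y)⁻¹) 1 = -(1 / 2) := by
    simpa using ((Real.hasDerivAt_sqrt one_ne_zero).fun_inv (by simp)).deriv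
  refine (taylor_isBigO_of_contDiffAt (n := 1) hsmooth).congr_left fun y ↦ ?_
  simp only [Finset.sum_range_succ, Finset.sum_range_zero, iteratedDeriv_zero, iteratedDeriv_one,
    hderiv, Real.sqrt_one, Nat.factorial, smul_eq_mul]
  push_cast
  ring

section CubicExpansion

variable {f : ℝ → ℝ} {a b : ℝ}

lemma div_sq_sub_linear_isBigO (ha : a ≠ 0)
    (hf : (fun t ↦ f t - (a * t ^ 2 + b * t ^ 3)) =O[𝓝 0] fun t ↦ t ^ 4) :
    (fun t ↦ f t / (a * t ^ 2) - (1 + b / a * t)) =O[𝓝[≠] 0] fun t ↦ t ^ 2 := by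
  have hscale : (fun t : ℝ ↦ (a * t ^ 2)⁻¹) =O[𝓝[≠] 0] fun t ↦ (t ^ 2)⁻¹ := by
    simpa only [mul_inv] using (isBigO_refl _ _).const_mul_left a⁻¹
  refine ((hf.mono nhdsWithin_le_nhds).mul hscale).congr' ?_ ?_ <;>
    filter_upwards [self_mem_nhdsWithin] with t (ht : t ≠ 0) <;> field_simp

lemma div_sq_sub_one_isBigO (ha : a ≠ 0)
    (hf : (fun t ↦ f t - (a * t ^ 2 + b * t ^ 3)) =O[𝓝 0] fun t ↦ t ^ 4) :
    (fun t ↦ f t / (a * t ^ 2) - 1) =O[𝓝[≠] 0] fun t ↦ t := by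
  have hsq : (fun t : ℝ ↦ t ^ 2) =O[𝓝[≠] 0] fun t ↦ t :=
    ((isLittleO_pow_id one_lt_two).isBigO).mono nhdsWithin_le_nhds
  have hlinear : (fun t : ℝ ↦ b / a * t) =O[𝓝[≠] 0] fun t ↦ t :=
    (isBigO_refl _ _).const_mul_left _
  exact (((div_sq_sub_linear_isBigO ha hf).trans hsq).add hlinear).congr_left fun t ↦ by ring

lemma tendsto_div_sq_one (ha : a ≠ 0)
    (hf : (fun t ↦ f t - (a * t ^ 2 + b * t ^ 3)) =O[𝓝 0] fun t ↦ t ^ 4) :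
    Tendsto (fun t ↦ f t / (a * t ^ 2)) (𝓝[≠] 0) (𝓝 1) :=
  tendsto_sub_nhds_zero_iff.1 <|
    (div_sq_sub_one_isBigO ha hf).trans_tendsto (tendsto_id.mono_left nhdsWithin_le_nhds)

lemma isBigO_sqrt_of_tendsto_div_sq (ha : 0 < a)
    (hratio : Tendsto (fun t ↦ f t / (a * t ^ 2)) (𝓝[≠] 0) (𝓝 1)) :
    (fun t ↦ t) =O[𝓝[≠] 0] fun t ↦ √(f t) := by
  have hsq : (fun t : ℝ ↦ t ^ 2) =O[𝓝[≠] 0] f :=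
    (isBigO_self_const_mul ha.ne' _ _).trans (isEquivalent_of_tendsto_one hratio).isBigO_symm
  have hnonneg : 0 ≤ᶠ[𝓝[≠] 0] f := by
    filter_upwards [hratio.eventually_const_lt one_pos, self_mem_nhdsWithin] with t hpos ht
    exact ((div_pos_iff_of_pos_right (mul_pos ha (sq_pos_of_ne_zero ht))).1 hpos).le
  exact ((hsq.sqrt hnonneg).congr_left fun t ↦ Real.sqrt_sq_eq_abs t).of_abs_left

lemma one_div_sub_sign_mul_sqrt_isBigO (ha : a ≠ 0)
    (hf : (fun t ↦ f t - (a * t ^ 2 + b * t ^ 3)) =O[𝓝 0] fun t ↦ t ^ 4) :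
    (fun t ↦ 1 / t - (SignType.sign t * √(a / f t) + b / (2 * a))) =O[𝓝[≠] 0] fun t ↦ t := by
  have hsqrt : (fun t ↦ (√(f t / (a * t ^ 2)))⁻¹ - (1 - (f t / (a * t ^ 2) - 1) / 2))
      =O[𝓝[≠] 0] fun t ↦ t ^ 2 :=
    (inv_sqrt_sub_linear_isBigO.comp_tendsto (tendsto_div_sq_one ha hf)).trans
      ((div_sq_sub_one_isBigO ha hf).pow 2)
  have hsecond : (fun t ↦ (√(f t / (a * t ^ 2)))⁻¹ - (1 - b / (2 * a) * t))
      =O[𝓝[≠] 0] fun t ↦ t ^ 2 :=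
    (hsqrt.sub ((div_sq_sub_linear_isBigO ha hf).const_mul_left (1 / 2))).congr_left
      fun t ↦ by ring
  refine (hsecond.neg_left.mul (isBigO_refl (fun t : ℝ ↦ t⁻¹) _)).congr' ?_ ?_ <;>
    filter_upwards [self_mem_nhdsWithin] with t (ht : t ≠ 0)
  · have hroot : (√(f t / (a * t ^ 2)))⁻¹ = √(a / f t) * (SignType.sign t * t) := by
      rw [← Real.sqrt_inv, inv_div, mul_div_right_comm, Real.sqrt_mul' _ (sq_nonneg t),
        Real.sqrt_sq_eq_abs, sign_mul_self]
    rw [hroot]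
    field_simp
    ring
  · field_simp

end CubicExpansion

theorem stmt_7_general {f tp tm : ℝ → ℝ} {a b : ℝ} (ha : 0 < a)
    (hf : (fun t ↦ f t - (a * t ^ 2 + b * t ^ 3)) =O[𝓝 0] fun t ↦ t ^ 4)
    (htp : ∀ᶠ x in 𝓝[>] (0 : ℝ), 0 < tp x ∧ f (tp x) = x)
    (htm : ∀ᶠ x in 𝓝[>] (0 : ℝ), tm x < 0 ∧ f (tm x) = x)
    (htp0 : Tendsto tp (𝓝[>] (0 : ℝ)) (𝓝 0))
    (htm0 : Tendsto tm (𝓝[>] (0 : ℝ)) (𝓝 0)) :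
    (fun x ↦ (1 / tp x + 1 / tm x) - b / a) =O[𝓝[>] (0 : ℝ)] fun x ↦ √x := by
  have hbranch := (one_div_sub_sign_mul_sqrt_isBigO ha.ne' hf).trans
    (isBigO_sqrt_of_tendsto_div_sq ha (tendsto_div_sq_one ha.ne' hf))
  have htp_ne : Tendsto tp (𝓝[>] 0) (𝓝[≠] 0) :=
    tendsto_nhdsWithin_iff.2 ⟨htp0, htp.mono fun _ h ↦ h.1.ne'⟩
  have htm_ne : Tendsto tm (𝓝[>] 0) (𝓝[≠] 0) :=
    tendsto_nhdsWithin_iff.2 ⟨htm0, htm.mono fun _ h ↦ h.1.ne⟩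
  have hplus : (fun x ↦ 1 / tp x - (√(a / x) + b / (2 * a))) =O[𝓝[>] 0] fun x ↦ √x := by
    refine (hbranch.comp_tendsto htp_ne).congr' ?_ ?_ <;>
      filter_upwards [htp] with x ⟨hpos, hfx⟩ <;> simp [hpos, hfx]
  have hminus : (fun x ↦ 1 / tm x - (-√(a / x) + b / (2 * a))) =O[𝓝[>] 0] fun x ↦ √x := by
    refine (hbranch.comp_tendsto htm_ne).congr' ?_ ?_ <;>
      filter_upwards [htm] with x ⟨hneg, hfx⟩ <;> simp [hneg, hfx]
  refine (hplus.add hminus).congr_left fun x ↦ ?_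
  field_simp
  ring

theorem stmt_7 (f tp tm : ℝ → ℝ)
    (hf : ContDiffAt ℝ 4 f 0)
    (hf0 : f 0 = 0) (hf1 : deriv f 0 = 0) (hf2 : deriv (deriv f) 0 = 1/2)
    (hfpos : ∀ᶠ t in 𝓝 (0:ℝ), 0 < deriv (deriv f) t)
    (htp : ∀ᶠ x in 𝓝[>] (0:ℝ), 0 < tp x ∧ f (tp x) = x)
    (htm : ∀ᶠ x in 𝓝[>] (0:ℝ), tm x < 0 ∧ f (tm x) = x)
    (htp0 : Tendsto tp (𝓝[>] (0:ℝ)) (𝓝 0))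
    (htm0 : Tendsto tm (𝓝[>] (0:ℝ)) (𝓝 0)) :
    (fun x => (1 / tp x + 1 / tm x) - 2/3 * deriv (deriv (deriv f)) 0)
      =O[𝓝[>] (0:ℝ)] fun x => Real.sqrt x := by
  exact (stmt_7_general (by norm_num [hf2]) (cubic_expansion_of_contDiffAt hf hf0 hf1)
    htp htm htp0 htm0).congr_left fun x ↦ by rw [hf2]; ring
end

section
/- With $f$, $t_+$ as in the context: $\dfrac{f''(t_+(x))}{f'(t_+(x))^3} = \dfrac{1}{2 x^{3/2}} + O\big(x^{-1/2}\big)$ as $x \to 0^+$. (Up to sign, this quantity is the second derivative $r_{x_2 x_2}$ of the distance $r$ from $(0,x)$ to the boundary graph in the direction $(1,0)$.) -/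
open Filter Topology Asymptotics

/-! Write `c = f''(0)`. As `t → 0`, up to `O(t²)` the functions `f''(t)`, `f'(t) / t` and
`f(t) / t²` are the affine functions `c + b t`, `c + (b/2) t` and `c/2 + (b/6) t`. In the product
`f''(t) * (f'(t) / t)⁻³ * (f(t) / t²)^(3/2)`, which equals `f(t)^(3/2) * f''(t) / f'(t)³`, the
logarithmic derivatives at `0` add up to `(b / c) * (1 - 3/2 + 3/2 * 1/3) = 0`, so the linear term
vanishes and `f^(3/2) * f'' / f'³ = (8c)^(-1/2) + O(t²)`. It remains to divide by `f^(3/2)`, to use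
`t² = O(f(t))` and to substitute `t = t₊(x)`. -/

section Taylor

variable {E : Type*} [NormedAddCommGroup E] [NormedSpace ℝ E] {f f' : ℝ → E} {a : ℝ}

lemma eventually_hasDerivAt_of_contDiffAt {n : WithTop ℕ∞} (hf : ContDiffAt ℝ n f a)
    (hn : 1 ≤ n) : ∀ᶠ t in 𝓝 a, HasDerivAt f (deriv f t) t := by
  filter_upwards [(hf.of_le hn).eventually (by simp)] with t ht
  exact (ht.differentiableAt one_ne_zero).hasDerivAt

lemma isBigO_sub_pow_succ_of_hasDerivAt {n : ℕ} (hf : ∀ᶠ t in 𝓝 a, HasDerivAt f (f' t) t)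
    (hf' : f' =O[𝓝 a] fun t => (t - a) ^ n) :
    (fun t => f t - f a) =O[𝓝 a] fun t => (t - a) ^ (n + 1) := by
  have hfderiv : fderiv ℝ f =O[𝓝 a] fun t => ‖t - a‖ ^ (n : ℝ) := by
    have hnorm : (fun t => ‖f' t‖) =ᶠ[𝓝 a] fun t => ‖fderiv ℝ f t‖ := by
      filter_upwards [hf] with t ht
      rw [← norm_deriv_eq_norm_fderiv, ht.deriv]
    simpa only [norm_pow, Real.rpow_natCast] using
      (hf'.norm_norm.congr' hnorm .rfl).of_norm_left
  have hsub := sub_isBigO_norm_rpow_add_one_of_fderiv n.cast_nonneg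
    (hf.mono fun t ht => ht.differentiableAt) hfderiv
  refine IsBigO.of_norm_right ?_
  simpa only [norm_pow, ← Nat.cast_add_one, Real.rpow_natCast] using hsub

lemma isBigO_sub_affine_of_contDiffAt (hf : ContDiffAt ℝ 2 f a) :
    (fun t => f t - (f a + (t - a) • deriv f a)) =O[𝓝 a] fun t => (t - a) ^ 2 := by
  have hderiv : (fun t => deriv f t - deriv f a) =O[𝓝 a] fun t => (t - a) ^ 1 := by
    simpa only [pow_one] using
      ((hf.derivWithin (m := 1) (by norm_num)).differentiableAt one_ne_zero).isBigO_sub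
  have hsub : ∀ᶠ t in 𝓝 a,
      HasDerivAt (fun t => f t - (t - a) • deriv f a) (deriv f t - deriv f a) t := by
    filter_upwards [eventually_hasDerivAt_of_contDiffAt hf one_le_two] with t ht
    simpa using! ht.sub (((hasDerivAt_id t).sub_const a).smul_const (deriv f a))
  refine (isBigO_sub_pow_succ_of_hasDerivAt hsub hderiv).congr_left fun t => ?_
  simp only [sub_self, zero_smul, sub_zero]
  abel

end Taylor

/-- The two-term expansion `g t = t ^ n * (a + b * t) + O(t ^ (n + 2))` along `l`, where `l` is a
filter of neighborhoods of `0`, possibly punctured or one-sided. -/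
def HasTwoTermExpansion (g : ℝ → ℝ) (n : ℕ) (a b : ℝ) (l : Filter ℝ) : Prop :=
  (fun t => g t - t ^ n * (a + b * t)) =O[l] fun t => t ^ (n + 2)

namespace HasTwoTermExpansion

variable {g h : ℝ → ℝ} {m n : ℕ} {a b a' b' : ℝ} {l : Filter ℝ}

lemma mono {l' : Filter ℝ} (hg : HasTwoTermExpansion g n a b l) (hl : l' ≤ l) :
    HasTwoTermExpansion g n a b l' :=
  IsBigO.mono hg hl

lemma isBigO_sub_leading (hg : HasTwoTermExpansion g n a b l) (hl : l ≤ 𝓝 0) :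
    (fun t => g t - a * t ^ n) =O[l] fun t => t ^ (n + 1) := by
  have hlinear : (fun t : ℝ => b * t ^ (n + 1)) =O[l] fun t => t ^ (n + 1) :=
    isBigO_const_mul_self b _ l
  have hpow : (fun t : ℝ => t ^ (n + 2)) =O[l] fun t => t ^ (n + 1) :=
    ((isLittleO_pow_pow (lt_add_one (n + 1))).mono hl).isBigO
  exact ((hg.trans hpow).add hlinear).congr_left fun t => by ring

lemma isBigO_pow (hg : HasTwoTermExpansion g n a b l) (hl : l ≤ 𝓝 0) :
    g =O[l] fun t => t ^ n := by
  have hpow : (fun t : ℝ => t ^ (n + 1)) =O[l] fun t => t ^ n :=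
    ((isLittleO_pow_pow (lt_add_one n)).mono hl).isBigO
  exact (((hg.isBigO_sub_leading hl).trans hpow).add
    (isBigO_const_mul_self a (fun t : ℝ => t ^ n) l)).congr_left fun t => by ring

lemma tendsto (hg : HasTwoTermExpansion g 0 a b l) (hl : l ≤ 𝓝 0) : Tendsto g l (𝓝 a) := by
  have hsub := (hg.isBigO_sub_leading hl).trans_tendsto (g'' := fun t : ℝ => t ^ (0 + 1))
    (by simpa [Tendsto] using hl)
  simpa using! hsub.add_const a

lemma affine_mul_pow (n : ℕ) (a b : ℝ) (l : Filter ℝ) :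
    HasTwoTermExpansion (fun t => t ^ n * (a + b * t)) n a b l := by
  simpa only [HasTwoTermExpansion, sub_self] using isBigO_zero _ l

lemma mul (hg : HasTwoTermExpansion g m a b l) (hh : HasTwoTermExpansion h n a' b' l)
    (hl : l ≤ 𝓝 0) :
    HasTwoTermExpansion (fun t => g t * h t) (m + n) (a * a') (a * b' + b * a') l := by
  have hleft := IsBigO.mul hg (hh.isBigO_pow hl)
  have hright := ((affine_mul_pow m a b l).isBigO_pow hl).mul hh
  have hcross := isBigO_const_mul_self (b * b') (fun t : ℝ => t ^ (m + n + 2)) l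
  simp only [← pow_add, ← add_assoc, add_right_comm m 2 n] at hleft hright
  exact ((hleft.add hright).add hcross).congr_left fun t => by ring

lemma comp {φ : ℝ → ℝ} (hg : HasTwoTermExpansion g 0 a b l) (hφ : ContDiffAt ℝ 2 φ a)
    (hl : l ≤ 𝓝 0) :
    HasTwoTermExpansion (fun t => φ (g t)) 0 (φ a) (deriv φ a * b) l := by
  have hsq : (fun t => (g t - a) ^ 2) =O[l] fun t => t ^ 2 := by
    simpa using (hg.isBigO_sub_leading hl).pow 2
  have htaylor : (fun t => φ (g t) - (φ a + (g t - a) * deriv φ a)) =O[l] fun t => t ^ 2 :=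
    ((isBigO_sub_affine_of_contDiffAt hφ).comp_tendsto (hg.tendsto hl)).trans hsq
  exact (htaylor.add (IsBigO.const_mul_left hg (deriv φ a))).congr_left fun t => by ring

lemma rpow_const (hg : HasTwoTermExpansion g 0 a b l) (ha : a ≠ 0) (s : ℝ) (hl : l ≤ 𝓝 0) :
    HasTwoTermExpansion (fun t => g t ^ s) 0 (a ^ s) (a ^ s * (s * (b / a))) l := by
  have hcomp := hg.comp (Real.contDiffAt_rpow_const_of_ne (p := s) ha) hl
  rw [Real.deriv_rpow_const, Real.rpow_sub_one ha] at hcomp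
  convert hcomp using 1
  ring

lemma div_pow (hg : HasTwoTermExpansion g n a b l) (hl : l ≤ 𝓝[≠] 0) :
    HasTwoTermExpansion (fun t => g t / t ^ n) 0 a b l := by
  have hne : ∀ᶠ t in l, t ≠ 0 := hl self_mem_nhdsWithin
  refine (IsBigO.mul hg (isBigO_refl (fun t => (t ^ n)⁻¹) l)).congr' ?_ ?_ <;>
    filter_upwards [hne] with t ht <;>
    field_simp
  ring

lemma of_contDiffAt (hg : ContDiffAt ℝ 2 g 0) :
    HasTwoTermExpansion g 0 (g 0) (deriv g 0) (𝓝 0) := by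
  simpa [HasTwoTermExpansion, mul_comm] using isBigO_sub_affine_of_contDiffAt hg

lemma antideriv {f f' : ℝ → ℝ} (hf' : HasTwoTermExpansion f' n a b (𝓝 0))
    (hf : ∀ᶠ t in 𝓝 0, HasDerivAt f (f' t) t) (hf0 : f 0 = 0) :
    HasTwoTermExpansion f (n + 1) (a / (n + 1)) (b / (n + 2)) (𝓝 0) := by
  have hsub : ∀ᶠ t in 𝓝 0, HasDerivAt
      (fun t => f t - t ^ (n + 1) * (a / (n + 1) + b / (n + 2) * t))
      (f' t - t ^ n * (a + b * t)) t := by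
    filter_upwards [hf] with t ht
    refine ht.sub ?_
    convert! (hasDerivAt_pow (n + 1) t).mul
      (((hasDerivAt_id t).const_mul (b / (n + 2))).const_add (a / (n + 1))) using 1
    simp only [Nat.cast_add, Nat.cast_one, add_tsub_cancel_right, id_eq, mul_one]
    field_simp
    ring
  simpa [hf0, HasTwoTermExpansion] using
    isBigO_sub_pow_succ_of_hasDerivAt hsub (by simpa [HasTwoTermExpansion] using hf')

end HasTwoTermExpansion

lemma mul_rpow_neg_three_mul_half_rpow {c : ℝ} (hc : 0 < c) :
    c * c ^ (-3 : ℝ) * (c / 2) ^ (3 / 2 : ℝ) = 1 / √(8 * c) := by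
  have hcube : c ^ (-3 : ℝ) = (c ^ 3)⁻¹ := by
    rw [Real.rpow_neg hc.le]
    norm_cast
  have hpow : (c / 2) ^ (3 / 2 : ℝ) = c / 2 * √(c / 2) := by
    rw [Real.sqrt_eq_rpow, ← Real.rpow_one_add' (by positivity) (by norm_num)]
    norm_num
  have hsqrt : √(8 * c) = 4 * √(c / 2) := by
    rw [show 8 * c = 4 ^ 2 * (c / 2) by ring, Real.sqrt_mul (by norm_num),
      Real.sqrt_sq (by norm_num)]
  have hsq : √(c / 2) ^ 2 = c / 2 := Real.sq_sqrt (by positivity)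
  rw [hcube, hpow, hsqrt]
  field_simp
  rw [hsq]
  ring

lemma mul_rpow_neg_three_mul_rpow_div_sq (p q : ℝ) {y t : ℝ} (hy : 0 ≤ y) (ht : 0 < t) :
    p * (q / t) ^ (-3 : ℝ) * (y / t ^ 2) ^ (3 / 2 : ℝ) = p / q ^ 3 * y ^ (3 / 2 : ℝ) := by
  have hcube : (q / t) ^ (-3 : ℝ) = ((q / t) ^ 3)⁻¹ := by
    exact_mod_cast Real.rpow_intCast (q / t) (-3)
  have hsq : (t ^ 2) ^ (3 / 2 : ℝ) = t ^ 3 := by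
    rw [← Real.rpow_natCast_mul ht.le, ← Real.rpow_natCast]
    norm_num
  rw [hcube, Real.div_rpow hy (sq_nonneg t), hsq]
  field_simp

section NondegenerateMinimum

variable {f f' f'' : ℝ → ℝ} {b c : ℝ}

lemma hasTwoTermExpansion_div_sq (hf0 : f 0 = 0) (hf'0 : f' 0 = 0)
    (hf : ∀ᶠ t in 𝓝 0, HasDerivAt f (f' t) t) (hf' : ∀ᶠ t in 𝓝 0, HasDerivAt f' (f'' t) t)
    (hf'' : HasTwoTermExpansion f'' 0 c b (𝓝 0)) :
    HasTwoTermExpansion (fun t => f t / t ^ 2) 0 (c / 2) (b / 6) (𝓝[≠] 0) := by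
  have hexp : HasTwoTermExpansion f 2 (c / 2) (b / 6) (𝓝 0) := by
    convert (hf''.antideriv hf' hf'0).antideriv hf hf0 using 1 <;> norm_num [div_div]
  exact (hexp.mono nhdsWithin_le_nhds).div_pow le_rfl

lemma hasTwoTermExpansion_deriv_ratio (hc : 0 < c) (hf0 : f 0 = 0) (hf'0 : f' 0 = 0)
    (hf : ∀ᶠ t in 𝓝 0, HasDerivAt f (f' t) t) (hf' : ∀ᶠ t in 𝓝 0, HasDerivAt f' (f'' t) t)
    (hf'' : HasTwoTermExpansion f'' 0 c b (𝓝 0)) :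
    HasTwoTermExpansion (fun t => f'' t * (f' t / t) ^ (-3 : ℝ) * (f t / t ^ 2) ^ (3 / 2 : ℝ))
      0 (1 / √(8 * c)) 0 (𝓝[≠] 0) := by
  have hle : 𝓝[≠] (0 : ℝ) ≤ 𝓝 0 := nhdsWithin_le_nhds
  have hquot' : HasTwoTermExpansion (fun t => f' t / t) 0 c (b / 2) (𝓝[≠] 0) := by
    simpa using ((hf''.antideriv hf' hf'0).mono hle).div_pow le_rfl
  have hquot := hasTwoTermExpansion_div_sq hf0 hf'0 hf hf' hf''
  have hprod := ((hf''.mono hle).mul (hquot'.rpow_const hc.ne' (-3) hle) hle).mul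
    (hquot.rpow_const (half_pos hc).ne' (3 / 2) hle) hle
  rw [mul_rpow_neg_three_mul_half_rpow hc] at hprod
  convert hprod using 1
  field_simp
  ring

theorem isBigO_deriv_ratio_sub (hc : 0 < c) (hf0 : f 0 = 0) (hf'0 : f' 0 = 0)
    (hf : ∀ᶠ t in 𝓝 0, HasDerivAt f (f' t) t) (hf' : ∀ᶠ t in 𝓝 0, HasDerivAt f' (f'' t) t)
    (hf'' : HasTwoTermExpansion f'' 0 c b (𝓝 0)) :
    (fun t => f'' t / f' t ^ 3 - 1 / (√(8 * c) * f t ^ (3 / 2 : ℝ)))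
      =O[𝓝[>] 0] fun t => f t ^ (-(1 / 2) : ℝ) := by
  have htendsto : Tendsto (fun t => f t / t ^ 2) (𝓝[>] 0) (𝓝 (c / 2)) :=
    ((hasTwoTermExpansion_div_sq hf0 hf'0 hf hf' hf'').mono (nhdsGT_le_nhdsNE 0)).tendsto
      nhdsWithin_le_nhds
  have hfpos : ∀ᶠ t in 𝓝[>] 0, 0 < f t := by
    filter_upwards [htendsto.eventually_const_lt (half_pos hc), self_mem_nhdsWithin] with t hquot ht
    exact (div_pos_iff_of_pos_right (pow_pos ht 2)).1 hquot
  have hsq : (fun t => t ^ 2) =O[𝓝[>] 0] f := by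
    refine isBigO_of_div_tendsto_nhds (hfpos.mono fun t ht h => absurd h ht.ne') (c / 2)⁻¹ ?_
    exact (htendsto.inv₀ (half_pos hc).ne').congr fun t => by simp
  have hratio : (fun t => f'' t * (f' t / t) ^ (-3 : ℝ) * (f t / t ^ 2) ^ (3 / 2 : ℝ)
      - 1 / √(8 * c)) =O[𝓝[>] 0] f := by
    have hexp := (hasTwoTermExpansion_deriv_ratio hc hf0 hf'0 hf hf' hf'').mono
      (nhdsGT_le_nhdsNE 0)
    simpa [HasTwoTermExpansion] using hexp.trans hsq
  refine ((isBigO_refl (fun t => f t ^ (-(3 / 2) : ℝ)) (𝓝[>] 0)).mul hratio).congr' ?_ ?_ <;>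
    filter_upwards [hfpos, self_mem_nhdsWithin] with t hft (ht : 0 < t)
  · rw [mul_rpow_neg_three_mul_rpow_div_sq _ _ hft.le ht, Real.rpow_neg hft.le]
    have hpow : f t ^ (3 / 2 : ℝ) ≠ 0 := by positivity
    field_simp
  · rw [← Real.rpow_add_one hft.ne']
    norm_num

end NondegenerateMinimum

theorem stmt_9_general {f f' f'' tp : ℝ → ℝ} {b c : ℝ} (hc : 0 < c)
    (hf0 : f 0 = 0) (hf'0 : f' 0 = 0)
    (hf : ∀ᶠ t in 𝓝 0, HasDerivAt f (f' t) t) (hf' : ∀ᶠ t in 𝓝 0, HasDerivAt f' (f'' t) t)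
    (hf'' : HasTwoTermExpansion f'' 0 c b (𝓝 0))
    (htp : ∀ᶠ x in 𝓝[>] 0, 0 < tp x ∧ f (tp x) = x) (htp0 : Tendsto tp (𝓝[>] 0) (𝓝 0)) :
    (fun x => f'' (tp x) / f' (tp x) ^ 3 - 1 / (√(8 * c) * x ^ (3 / 2 : ℝ)))
      =O[𝓝[>] 0] fun x => x ^ (-(1 / 2) : ℝ) := by
  have htp_right : Tendsto tp (𝓝[>] 0) (𝓝[>] 0) :=
    tendsto_nhdsWithin_iff.2 ⟨htp0, htp.mono fun x hx => hx.1⟩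
  refine ((isBigO_deriv_ratio_sub hc hf0 hf'0 hf hf' hf'').comp_tendsto htp_right).congr' ?_ ?_ <;>
    filter_upwards [htp] with x hx <;>
    simp only [Function.comp_apply, hx.2]

theorem stmt_9 (f tp tm : ℝ → ℝ)
    (hf : ContDiffAt ℝ 4 f 0)
    (hf0 : f 0 = 0) (hf1 : deriv f 0 = 0) (hf2 : deriv (deriv f) 0 = 1/2)
    (hfpos : ∀ᶠ t in 𝓝 (0:ℝ), 0 < deriv (deriv f) t)
    (htp : ∀ᶠ x in 𝓝[>] (0:ℝ), 0 < tp x ∧ f (tp x) = x)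
    (htm : ∀ᶠ x in 𝓝[>] (0:ℝ), tm x < 0 ∧ f (tm x) = x)
    (htp0 : Tendsto tp (𝓝[>] (0:ℝ)) (𝓝 0))
    (htm0 : Tendsto tm (𝓝[>] (0:ℝ)) (𝓝 0)) :
    (fun x => deriv (deriv f) (tp x) / (deriv f (tp x)) ^ 3 - 1 / (2 * x ^ (3/2 : ℝ)))
      =O[𝓝[>] (0:ℝ)] fun x => x ^ (-(1/2) : ℝ) := by
  have hf' : ContDiffAt ℝ 3 (deriv f) 0 := hf.derivWithin (by norm_num)
  have hf'' : ContDiffAt ℝ 2 (deriv (deriv f)) 0 := hf'.derivWithin (by norm_num)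
  have hsqrt : √(8 * (1 / 2)) = 2 := by rw [Real.sqrt_eq_iff_mul_self_eq] <;> norm_num
  simpa only [hsqrt] using stmt_9_general one_half_pos hf0 hf1
    (eventually_hasDerivAt_of_contDiffAt hf (by norm_num))
    (eventually_hasDerivAt_of_contDiffAt hf' (by norm_num))
    (hf2 ▸ HasTwoTermExpansion.of_contDiffAt hf'') htp htp0
end

section
/- Let $\omega : \mathbb{R} \to (0, \infty)$ be twice differentiable with $\omega(0) = 1$, $\omega'(0) = 0$, and $\omega'(\pi) = 0$. For $r > 0$ define $\rho_r(\varphi) = \dfrac{\omega(\pi - \varphi)\, \omega(\varphi)\, (e^{2r} - 1)}{\omega(\varphi) + \omega(\pi - \varphi) e^{2r}}$ and $c_r(\varphi) = \rho_r(\varphi) \, (\sin\varphi, \cos\varphi)$. Then $c_r''(0) = \Big( 0, \ \dfrac{(e^{2r} - 1)\big( e^{2r} \omega(\pi)^2 (\omega''(0) - 1) + \omega''(\pi) - \omega(\pi) \big)}{(1 + e^{2r} \omega(\pi))^2} \Big)$, and in particular $c_r''(0) \to (0, \ \omega''(0) - 1)$ as $r \to \infty$. -/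
open Filter Topology Real

/-! With `E = exp (2 * r)`, the polar function of the Hilbert circle is the constant `E - 1` times
the reciprocal of `1 / ω (π - φ) + E / ω φ`. Both `0` and `π` are critical points of `ω`, and at a
critical point the second derivative of `1 / f` is just `-f'' / f ^ 2`; hence `0` is a critical
point of `ρ_r`, where the polar curve has second derivative `(2 ρ_r', ρ_r'' - ρ_r)`. As a function
of `E`, its second coordinate is a product of two fractional linear functions, which gives the
limit. -/

section SecondDerivative

variable {𝕜 : Type*} [NontriviallyNormedField 𝕜]
  {F : Type*} [NormedAddCommGroup F] [NormedSpace 𝕜 F]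
  {G : Type*} [NormedAddCommGroup G] [NormedSpace 𝕜 G]
  {𝔸 : Type*} [NormedRing 𝔸] [NormedAlgebra 𝕜 𝔸]

/-- `f` is differentiable near `x`, with first derivative `f'` and second derivative `f''` at `x`.
The derivative near `x` is existentially quantified, so that the rules of calculus act on
the numbers `f'` and `f''` alone. -/
def HasSecondDerivAt (f : 𝕜 → F) (f' f'' : F) (x : 𝕜) : Prop :=
  ∃ g : 𝕜 → F, (∀ᶠ y in 𝓝 x, HasDerivAt f (g y) y) ∧ g x = f' ∧ HasDerivAt g f'' x

theorem hasSecondDerivAt_deriv {f : 𝕜 → F} {x : 𝕜} (hf : ∀ᶠ y in 𝓝 x, DifferentiableAt 𝕜 f y)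
    (hf' : DifferentiableAt 𝕜 (deriv f) x) :
    HasSecondDerivAt f (deriv f x) (deriv (deriv f) x) x :=
  ⟨deriv f, hf.mono fun _ hy => hy.hasDerivAt, rfl, hf'.hasDerivAt⟩

theorem hasSecondDerivAt_sin (x : ℝ) : HasSecondDerivAt sin (cos x) (-sin x) x :=
  ⟨cos, .of_forall hasDerivAt_sin, rfl, hasDerivAt_cos x⟩

theorem hasSecondDerivAt_cos (x : ℝ) : HasSecondDerivAt cos (-sin x) (-cos x) x :=
  ⟨fun y => -sin y, .of_forall hasDerivAt_cos, rfl, (hasDerivAt_sin x).fun_neg⟩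

namespace HasSecondDerivAt

variable {f f₁ f₂ : 𝕜 → F} {f' f'' f₁' f₁'' f₂' f₂'' : F} {x : 𝕜}

theorem hasDerivAt (hf : HasSecondDerivAt f f' f'' x) : HasDerivAt f f' x := by
  obtain ⟨g, hfg, rfl, -⟩ := hf
  exact hfg.self_of_nhds

theorem deriv_deriv (hf : HasSecondDerivAt f f' f'' x) : deriv (deriv f) x = f'' := by
  obtain ⟨g, hfg, -, hg⟩ := hf
  have deriv_eq : deriv f =ᶠ[𝓝 x] g := hfg.mono fun _ hy => hy.deriv
  exact deriv_eq.deriv_eq.trans hg.deriv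

theorem congr_deriv {g' g'' : F} (hf : HasSecondDerivAt f f' f'' x) (h' : f' = g')
    (h'' : f'' = g'') : HasSecondDerivAt f g' g'' x :=
  h' ▸ h'' ▸ hf

theorem congr_of_eventuallyEq (hf : HasSecondDerivAt f f' f'' x) (h : f₁ =ᶠ[𝓝 x] f) :
    HasSecondDerivAt f₁ f' f'' x := by
  obtain ⟨g, hfg, hgx, hg⟩ := hf
  refine ⟨g, ?_, hgx, hg⟩
  filter_upwards [hfg, h.eventuallyEq_nhds] with y hy hfy
  exact hy.congr_of_eventuallyEq hfy

theorem add (hf₁ : HasSecondDerivAt f₁ f₁' f₁'' x) (hf₂ : HasSecondDerivAt f₂ f₂' f₂'' x) :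
    HasSecondDerivAt (fun y => f₁ y + f₂ y) (f₁' + f₂') (f₁'' + f₂'') x := by
  obtain ⟨g₁, hfg₁, rfl, hg₁⟩ := hf₁
  obtain ⟨g₂, hfg₂, rfl, hg₂⟩ := hf₂
  exact ⟨fun y => g₁ y + g₂ y, hfg₁.and hfg₂ |>.mono fun _ hy => hy.1.fun_add hy.2, rfl,
    hg₁.fun_add hg₂⟩

theorem prodMk {k : 𝕜 → G} {k' k'' : G} (hf : HasSecondDerivAt f f' f'' x)
    (hk : HasSecondDerivAt k k' k'' x) :
    HasSecondDerivAt (fun y => (f y, k y)) (f', k') (f'', k'') x := by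
  obtain ⟨g, hfg, rfl, hg⟩ := hf
  obtain ⟨l, hkl, rfl, hl⟩ := hk
  exact ⟨fun y => (g y, l y), hfg.and hkl |>.mono fun _ hy => hy.1.prodMk hy.2, rfl, hg.prodMk hl⟩

theorem comp_const_sub (a : 𝕜) (hf : HasSecondDerivAt f f' f'' (a - x)) :
    HasSecondDerivAt (fun y => f (a - y)) (-f') f'' x := by
  obtain ⟨g, hfg, rfl, hg⟩ := hf
  have reflect_tendsto : Tendsto (fun y => a - y) (𝓝 x) (𝓝 (a - x)) :=
    (continuous_const.sub continuous_id).tendsto x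
  refine ⟨fun y => -g (a - y), ?_, rfl, by simpa using (hg.comp_const_sub a x).fun_neg⟩
  exact (reflect_tendsto.eventually hfg).mono fun y hy => hy.comp_const_sub a y

theorem const_mul {f : 𝕜 → 𝔸} {f' f'' : 𝔸} (a : 𝔸) (hf : HasSecondDerivAt f f' f'' x) :
    HasSecondDerivAt (fun y => a * f y) (a * f') (a * f'') x := by
  obtain ⟨g, hfg, rfl, hg⟩ := hf
  exact ⟨fun y => a * g y, hfg.mono fun _ hy => hy.const_mul a, rfl, hg.const_mul a⟩

theorem mul {f k : 𝕜 → 𝔸} {f' f'' k' k'' : 𝔸} (hf : HasSecondDerivAt f f' f'' x)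
    (hk : HasSecondDerivAt k k' k'' x) :
    HasSecondDerivAt (fun y => f y * k y) (f' * k x + f x * k')
      (f'' * k x + 2 * (f' * k') + f x * k'') x := by
  have hf₁ := hf.hasDerivAt
  have hk₁ := hk.hasDerivAt
  obtain ⟨g, hfg, rfl, hg⟩ := hf
  obtain ⟨l, hkl, rfl, hl⟩ := hk
  refine ⟨fun y => g y * k y + f y * l y, hfg.and hkl |>.mono fun _ hy => hy.1.fun_mul hy.2, rfl,
    ((hg.fun_mul hk₁).fun_add (hf₁.fun_mul hl)).congr_deriv ?_⟩
  rw [two_mul]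
  abel

theorem inv {f : 𝕜 → 𝕜} {f' f'' : 𝕜} (hf : HasSecondDerivAt f f' f'' x) (hx : f x ≠ 0) :
    HasSecondDerivAt (fun y => (f y)⁻¹) (-f' / f x ^ 2)
      (2 * f' ^ 2 / f x ^ 3 - f'' / f x ^ 2) x := by
  have hf₁ := hf.hasDerivAt
  obtain ⟨g, hfg, rfl, hg⟩ := hf
  have ne_zero : ∀ᶠ y in 𝓝 x, f y ≠ 0 := hf₁.continuousAt.eventually_ne hx
  refine ⟨fun y => -g y / f y ^ 2, hfg.and ne_zero |>.mono fun _ hy => hy.1.fun_inv hy.2, rfl,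
    (hg.fun_neg.fun_div (hf₁.fun_pow 2) (pow_ne_zero 2 hx)).congr_deriv ?_⟩
  field_simp
  ring

theorem inv_of_deriv_eq_zero {f : 𝕜 → 𝕜} {f'' : 𝕜} (hf : HasSecondDerivAt f 0 f'' x)
    (hx : f x ≠ 0) : HasSecondDerivAt (fun y => (f y)⁻¹) 0 (-f'' / f x ^ 2) x :=
  (hf.inv hx).congr_deriv (by simp) (by simp [neg_div])

end HasSecondDerivAt

end SecondDerivative

/-- The curve with polar function `ρ`, where the polar angle is measured clockwise from the
positive second coordinate axis. -/
noncomputable def polarCurve (ρ : ℝ → ℝ) (φ : ℝ) : ℝ × ℝ :=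
  (ρ φ * sin φ, ρ φ * cos φ)

theorem HasSecondDerivAt.polarCurve {ρ : ℝ → ℝ} {ρ' ρ'' φ : ℝ}
    (hρ : HasSecondDerivAt ρ ρ' ρ'' φ) :
    HasSecondDerivAt (polarCurve ρ)
      (ρ' * sin φ + ρ φ * cos φ, ρ' * cos φ - ρ φ * sin φ)
      ((ρ'' - ρ φ) * sin φ + 2 * ρ' * cos φ, (ρ'' - ρ φ) * cos φ - 2 * ρ' * sin φ) φ := by
  refine ((hρ.mul (hasSecondDerivAt_sin φ)).prodMk
    (hρ.mul (hasSecondDerivAt_cos φ))).congr_deriv ?_ ?_ <;>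
  exact Prod.ext (by ring) (by ring)

/-- The polar function of the Hilbert circle of radius `r` about the origin, for a convex domain
whose boundary has polar function `ω`. -/
noncomputable def hilbertCircleRadius (ω : ℝ → ℝ) (r φ : ℝ) : ℝ :=
  ω (π - φ) * ω φ * (exp (2 * r) - 1) / (ω φ + ω (π - φ) * exp (2 * r))

theorem hilbertCircleRadius_eq_mul_inv {ω : ℝ → ℝ} {φ : ℝ} (r : ℝ) (hφ : ω φ ≠ 0)
    (hπφ : ω (π - φ) ≠ 0) :
    hilbertCircleRadius ω r φ =
      (exp (2 * r) - 1) * ((ω (π - φ))⁻¹ + exp (2 * r) * (ω φ)⁻¹)⁻¹ := by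
  have sum_inv : (ω (π - φ))⁻¹ + exp (2 * r) * (ω φ)⁻¹ =
      (ω φ + ω (π - φ) * exp (2 * r)) / (ω (π - φ) * ω φ) := by
    field_simp
  rw [hilbertCircleRadius, sum_inv, inv_div]
  ring

section HilbertCircle

variable {ω : ℝ → ℝ} {a b : ℝ}

theorem hasSecondDerivAt_hilbertCircleRadius (h₀ : HasSecondDerivAt ω 0 a 0)
    (hπ : HasSecondDerivAt ω 0 b π) (pos₀ : 0 < ω 0) (posπ : 0 < ω π) (r : ℝ) :
    HasSecondDerivAt (hilbertCircleRadius ω r) 0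
      ((exp (2 * r) - 1) * (exp (2 * r) * ω π ^ 2 * a + ω 0 ^ 2 * b) /
        (ω 0 + exp (2 * r) * ω π) ^ 2) 0 := by
  have posπ₀ : 0 < ω (π - 0) := by rwa [sub_zero]
  have hπ₀ : HasSecondDerivAt (fun φ => ω (π - φ)) 0 b 0 := by
    rw [← sub_zero π] at hπ
    simpa only [neg_zero] using hπ.comp_const_sub π
  have eq_mul_inv : hilbertCircleRadius ω r =ᶠ[𝓝 0] fun φ =>
      (exp (2 * r) - 1) * ((ω (π - φ))⁻¹ + exp (2 * r) * (ω φ)⁻¹)⁻¹ := by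
    filter_upwards [h₀.hasDerivAt.continuousAt.eventually_ne pos₀.ne',
      hπ₀.hasDerivAt.continuousAt.eventually_ne posπ₀.ne'] with φ hφ hπφ
    exact hilbertCircleRadius_eq_mul_inv r hφ hπφ
  have h_sum : HasSecondDerivAt (fun φ => (ω (π - φ))⁻¹ + exp (2 * r) * (ω φ)⁻¹) 0
      (-b / ω π ^ 2 + exp (2 * r) * (-a / ω 0 ^ 2)) 0 := by
    simpa only [sub_zero, mul_zero, add_zero] using (hπ₀.inv_of_deriv_eq_zero posπ₀.ne').add
      ((h₀.inv_of_deriv_eq_zero pos₀.ne').const_mul (exp (2 * r)))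
  have sum_ne_zero : (ω (π - 0))⁻¹ + exp (2 * r) * (ω 0)⁻¹ ≠ 0 := by positivity
  refine (((h_sum.inv_of_deriv_eq_zero sum_ne_zero).const_mul (exp (2 * r) - 1)).congr_deriv
    (mul_zero _) ?_).congr_of_eventuallyEq eq_mul_inv
  rw [sub_zero]
  field_simp
  ring

theorem deriv_deriv_polarCurve_hilbertCircleRadius (h₀ : HasSecondDerivAt ω 0 a 0)
    (hπ : HasSecondDerivAt ω 0 b π) (pos₀ : 0 < ω 0) (posπ : 0 < ω π) (r : ℝ) :
    deriv (deriv (polarCurve (hilbertCircleRadius ω r))) 0 =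
      (0, (exp (2 * r) - 1) *
          (exp (2 * r) * ω π ^ 2 * (a - ω 0) + ω 0 ^ 2 * (b - ω π)) /
        (ω 0 + exp (2 * r) * ω π) ^ 2) := by
  rw [(hasSecondDerivAt_hilbertCircleRadius h₀ hπ pos₀ posπ r).polarCurve.deriv_deriv]
  simp only [hilbertCircleRadius, sin_zero, cos_zero, sub_zero, mul_zero, mul_one,
    add_zero, Prod.mk.injEq, true_and]
  field_simp
  ring

end HilbertCircle

theorem tendsto_mul_add_div_mul_add_atTop {𝕜 : Type*} [Field 𝕜] [LinearOrder 𝕜]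
    [IsStrictOrderedRing 𝕜] [TopologicalSpace 𝕜] [OrderTopology 𝕜] (a b : 𝕜) {c : 𝕜} (d : 𝕜)
    (hc : c ≠ 0) :
    Tendsto (fun x : 𝕜 => (a * x + b) / (c * x + d)) atTop (𝓝 (a / c)) := by
  have h_affine (p q : 𝕜) : Tendsto (fun x : 𝕜 => p + q * x⁻¹) atTop (𝓝 p) := by
    simpa using (tendsto_inv_atTop_zero.const_mul q).const_add p
  refine ((h_affine a b).div (h_affine c d) hc).congr' ?_
  filter_upwards [eventually_ne_atTop 0] with x hx
  rw [Pi.div_apply, ← mul_div_mul_right _ _ hx]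
  simp only [add_mul, inv_mul_cancel_right₀ hx]

theorem stmt_16_general (ω : ℝ → ℝ) {a b : ℝ} (h₀ : HasSecondDerivAt ω 0 a 0)
    (hπ : HasSecondDerivAt ω 0 b π) (pos₀ : 0 < ω 0) (posπ : 0 < ω π)
    (ρ : ℝ → ℝ → ℝ)
    (hρ : ∀ r φ, ρ r φ =
      ω (π - φ) * ω φ * (exp (2 * r) - 1) / (ω φ + ω (π - φ) * exp (2 * r)))
    (c : ℝ → ℝ → ℝ × ℝ)
    (hc : ∀ r φ, c r φ = (ρ r φ * sin φ, ρ r φ * cos φ)) :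
    (∀ r : ℝ, deriv (deriv (c r)) 0 =
      (0, (exp (2 * r) - 1) *
            (exp (2 * r) * ω π ^ 2 * (a - ω 0) + ω 0 ^ 2 * (b - ω π)) /
          (ω 0 + exp (2 * r) * ω π) ^ 2)) ∧
      Tendsto (fun r => deriv (deriv (c r)) 0) atTop (𝓝 (0, a - ω 0)) := by
  obtain rfl : ρ = hilbertCircleRadius ω := funext₂ hρ
  obtain rfl : c = fun r => polarCurve (hilbertCircleRadius ω r) := funext₂ hc
  have h_deriv := deriv_deriv_polarCurve_hilbertCircleRadius h₀ hπ pos₀ posπ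
  refine ⟨h_deriv, ?_⟩
  simp_rw [h_deriv]
  refine tendsto_const_nhds.prodMk_nhds ?_
  have exp_tendsto : Tendsto (fun r : ℝ => exp (2 * r)) atTop atTop :=
    tendsto_exp_atTop.comp (tendsto_id.const_mul_atTop two_pos)
  convert ((tendsto_mul_add_div_mul_add_atTop 1 (-1) (ω 0) posπ.ne').mul
    (tendsto_mul_add_div_mul_add_atTop (ω π ^ 2 * (a - ω 0)) (ω 0 ^ 2 * (b - ω π)) (ω 0)
      posπ.ne')).comp exp_tendsto using 1
  · ext r
    simp only [Function.comp_apply]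
    rw [div_mul_div_comm]
    congr 1 <;> ring
  · congr 1
    field_simp

/-- The second derivative at `φ = 0` of the Cartesian parametrization of the Hilbert
circle of radius `r`, and its limit `(0, ω''(0) - 1)` as `r → ∞`. -/
theorem stmt_16 (ω : ℝ → ℝ) (hωpos : ∀ φ, 0 < ω φ)
    (hω : Differentiable ℝ ω) (hω' : Differentiable ℝ (deriv ω))
    (hω0 : ω 0 = 1) (hω1 : deriv ω 0 = 0) (hω1π : deriv ω π = 0)
    (ρ : ℝ → ℝ → ℝ)
    (hρ : ∀ r φ, ρ r φ =
      ω (π - φ) * ω φ * (Real.exp (2 * r) - 1) / (ω φ + ω (π - φ) * Real.exp (2 * r)))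
    (c : ℝ → ℝ → ℝ × ℝ)
    (hc : ∀ r φ, c r φ = (ρ r φ * Real.sin φ, ρ r φ * Real.cos φ)) :
    (∀ r : ℝ, 0 < r → deriv (deriv (c r)) 0 =
      (0, (Real.exp (2 * r) - 1) *
            (Real.exp (2 * r) * ω π ^ 2 * (deriv (deriv ω) 0 - 1) + deriv (deriv ω) π - ω π) /
          (1 + Real.exp (2 * r) * ω π) ^ 2)) ∧
      Tendsto (fun r => deriv (deriv (c r)) 0) atTop (𝓝 (0, deriv (deriv ω) 0 - 1)) := by
  have h₀ := hω1 ▸ hasSecondDerivAt_deriv (.of_forall hω) (hω' 0)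
  have hπ := hω1π ▸ hasSecondDerivAt_deriv (.of_forall hω) (hω' π)
  have general := stmt_16_general ω h₀ hπ (hωpos 0) (hωpos π) ρ hρ c hc
  simp only [hω0, one_pow, one_mul, ← add_sub_assoc] at general
  exact ⟨fun r _ => general.1 r, general.2⟩
end

section
/- With $f$, $t_+$, $t_-$ as in the context, let $H > 0$. Then $\dfrac{\tfrac{1}{2}\big( \tfrac{1}{x} + \tfrac{1}{H - x} \big)}{2 \Big( \tfrac{1}{2}\big( \tfrac{1}{t_+(x)} - \tfrac{1}{t_-(x)} \big) \Big)^2} \longrightarrow 1$ as $x \to 0^+$. (The numerator is the Hilbert metric $F((0,x),(0,1))$ in the vertical direction, where $H$ is the length of the vertical chord of the domain through $(0,x)$; the denominator is $2 F((0,x),(1,0))^2$; the whole quotient is the normal curvature of the Hilbert circle through $(0,x)$ centered on the vertical chord, which therefore tends to $1$ as the radius tends to infinity.) -/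
open Filter Topology Asymptotics

/-! The Hilbert norm of a unit vector is the mean of the reciprocals of the distances `p` and `q` to
the boundary ahead and behind. If `f t ~ c t²` at `0` with `c > 0`, then the horizontal chord at
height `x` has endpoints `t ~ ± √(x / c)`, so the horizontal norm is asymptotic to `√(c / x)`, while
the vertical one is asymptotic to `1 / (2 x)`. In the quotient the factors `x` cancel and
`1 / (4 c)` is left; for a `C²` function vanishing to first order, `c = f''(0) / 2`. -/

section SecondOrderTaylor

variable {f f' : ℝ → ℝ} {f'' a : ℝ}

theorem tendsto_taylor_one_remainder_div_sq (hf : ∀ᶠ t in 𝓝 a, HasDerivAt f (f' t) t)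
    (hf' : HasDerivAt f' f'' a) :
    Tendsto (fun t ↦ (f t - f a - (t - a) * f' a) / (t - a) ^ 2) (𝓝[≠] a) (𝓝 (f'' / 2)) := by
  have hsub (t : ℝ) : HasDerivAt (fun s ↦ s - a) 1 t := (hasDerivAt_id t).sub_const a
  have hremainder : ∀ᶠ t in 𝓝 a,
      HasDerivAt (fun s ↦ f s - f a - (s - a) * f' a) (f' t - f' a) t := by
    filter_upwards [hf] with t ht
    simpa using (ht.sub_const (f a)).fun_sub ((hsub t).mul_const (f' a))
  have hsq (t : ℝ) : HasDerivAt (fun s ↦ (s - a) ^ 2) (2 * (t - a)) t := by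
    simpa using (hsub t).fun_pow 2
  have hslope : Tendsto (fun t ↦ (f' t - f' a) / (2 * (t - a))) (𝓝[≠] a) (𝓝 (f'' / 2)) := by
    refine (hf'.tendsto_slope.div_const 2).congr fun t ↦ ?_
    rw [slope_def_field, div_div, mul_comm]
  refine HasDerivAt.lhopital_zero_nhdsNE (hremainder.filter_mono nhdsWithin_le_nhds)
    (.of_forall hsq) ?_ ?_ ?_ hslope
  · filter_upwards [self_mem_nhdsWithin] with t ht
    exact mul_ne_zero two_ne_zero (sub_ne_zero.2 ht)
  · simpa using hremainder.self_of_nhds.continuousAt.tendsto.mono_left nhdsWithin_le_nhds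
  · simpa using (hsq a).continuousAt.tendsto.mono_left nhdsWithin_le_nhds

theorem tendsto_div_sq_of_contDiffAt_two (hf : ContDiffAt ℝ 2 f a) (hfa : f a = 0)
    (hf'a : deriv f a = 0) :
    Tendsto (fun t ↦ f t / (t - a) ^ 2) (𝓝[≠] a) (𝓝 (deriv (deriv f) a / 2)) := by
  have hderiv : ∀ᶠ t in 𝓝 a, HasDerivAt f (deriv f t) t := by
    filter_upwards [hf.eventually (by simp)] with t ht
    exact (ht.differentiableAt two_ne_zero).hasDerivAt
  have hderiv' : HasDerivAt (deriv f) (deriv (deriv f) a) a :=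
    ((hf.derivWithin (m := 1) (by norm_num)).differentiableAt one_ne_zero).hasDerivAt
  simpa [hfa, hf'a] using tendsto_taylor_one_remainder_div_sq hderiv hderiv'

end SecondOrderTaylor

/-- The Hilbert (Finsler) norm of a Euclidean unit vector based at an interior point of a convex
domain, as a function of the distances `p` and `q` from that point to the boundary in the direction
of the vector and in the opposite direction. -/
noncomputable def hilbertNorm (p q : ℝ) : ℝ := 1 / 2 * (1 / p + 1 / q)

theorem tendsto_mul_hilbertNorm_vertical {H : ℝ} (hH : H ≠ 0) :
    Tendsto (fun x ↦ x * hilbertNorm x (H - x)) (𝓝[≠] 0) (𝓝 (1 / 2)) := by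
  have hcont : ContinuousAt (fun x ↦ 1 / 2 * (1 + x / (H - x))) 0 := by
    fun_prop (disch := simpa using hH)
  have hsum : Tendsto (fun x ↦ 1 / 2 * (1 + x / (H - x))) (𝓝[≠] 0) (𝓝 (1 / 2)) := by
    simpa only [zero_div, add_zero, mul_one] using hcont.tendsto.mono_left nhdsWithin_le_nhds
  refine hsum.congr' ?_
  filter_upwards [self_mem_nhdsWithin] with x (hx : x ≠ 0)
  rw [hilbertNorm, mul_left_comm, mul_add x, mul_one_div_cancel hx, mul_one_div]

section Chord

variable {f s tp tm : ℝ → ℝ} {c : ℝ} {l : Filter ℝ}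

theorem tendsto_sqrt_div_abs_of_rightInverse
    (hf : Tendsto (fun t ↦ f t / t ^ 2) (𝓝[≠] 0) (𝓝 c)) (hs : Tendsto s l (𝓝[≠] 0))
    (hfs : ∀ᶠ x in l, f (s x) = x) :
    Tendsto (fun x ↦ √x / |s x|) l (𝓝 √c) := by
  refine (hf.comp hs).sqrt.congr' ?_
  filter_upwards [hfs] with x hx
  rw [Function.comp_apply, hx, Real.sqrt_div' _ (sq_nonneg _), Real.sqrt_sq_eq_abs]

theorem tendsto_sqrt_mul_hilbertNorm_horizontal
    (hf : Tendsto (fun t ↦ f t / t ^ 2) (𝓝[≠] 0) (𝓝 c))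
    (htp : ∀ᶠ x in l, 0 < tp x ∧ f (tp x) = x) (htm : ∀ᶠ x in l, tm x < 0 ∧ f (tm x) = x)
    (htp0 : Tendsto tp l (𝓝 0)) (htm0 : Tendsto tm l (𝓝 0)) :
    Tendsto (fun x ↦ √x * hilbertNorm (tp x) (-tm x)) l (𝓝 √c) := by
  have hright : Tendsto (fun x ↦ √x / |tp x|) l (𝓝 √c) :=
    tendsto_sqrt_div_abs_of_rightInverse hf
      (tendsto_nhdsWithin_iff.2 ⟨htp0, htp.mono fun _ hx ↦ hx.1.ne'⟩) (htp.mono fun _ hx ↦ hx.2)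
  have hleft : Tendsto (fun x ↦ √x / |tm x|) l (𝓝 √c) :=
    tendsto_sqrt_div_abs_of_rightInverse hf
      (tendsto_nhdsWithin_iff.2 ⟨htm0, htm.mono fun _ hx ↦ hx.1.ne⟩) (htm.mono fun _ hx ↦ hx.2)
  have hmean : Tendsto (fun x ↦ 1 / 2 * (√x / |tp x| + √x / |tm x|)) l (𝓝 √c) := by
    convert (hright.add hleft).const_mul (1 / 2) using 2
    ring
  refine hmean.congr' ?_
  filter_upwards [htp, htm] with x hp hm
  rw [abs_of_pos hp.1, abs_of_neg hm.1, hilbertNorm]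
  ring

end Chord

theorem stmt_17_general {f tp tm : ℝ → ℝ} {H c : ℝ} (hH : H ≠ 0) (hc : 0 < c)
    (hf : Tendsto (fun t ↦ f t / t ^ 2) (𝓝[≠] 0) (𝓝 c))
    (htp : ∀ᶠ x in 𝓝[>] (0 : ℝ), 0 < tp x ∧ f (tp x) = x)
    (htm : ∀ᶠ x in 𝓝[>] (0 : ℝ), tm x < 0 ∧ f (tm x) = x)
    (htp0 : Tendsto tp (𝓝[>] 0) (𝓝 0)) (htm0 : Tendsto tm (𝓝[>] 0) (𝓝 0)) :
    Tendsto (fun x ↦ hilbertNorm x (H - x) / (2 * hilbertNorm (tp x) (-tm x) ^ 2))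
      (𝓝[>] 0) (𝓝 (1 / (4 * c))) := by
  have hvertical := (tendsto_mul_hilbertNorm_vertical hH).mono_left (nhdsGT_le_nhdsNE 0)
  have hhorizontal := tendsto_sqrt_mul_hilbertNorm_horizontal hf htp htm htp0 htm0
  have hquot : Tendsto (fun x ↦ x * hilbertNorm x (H - x) /
      (2 * (√x * hilbertNorm (tp x) (-tm x)) ^ 2)) (𝓝[>] 0) (𝓝 (1 / 2 / (2 * √c ^ 2))) :=
    hvertical.div ((hhorizontal.pow 2).const_mul 2) (by positivity)
  have hlimit : 1 / 2 / (2 * √c ^ 2) = 1 / (4 * c) := by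
    rw [Real.sq_sqrt hc.le, div_div]
    ring
  rw [hlimit] at hquot
  refine hquot.congr' ?_
  filter_upwards [self_mem_nhdsWithin] with x (hx : 0 < x)
  rw [mul_pow, Real.sq_sqrt hx.le, mul_left_comm 2 x, mul_div_mul_left _ _ hx.ne']

theorem stmt_17 (f tp tm : ℝ → ℝ) (H : ℝ) (hH : 0 < H)
    (hf : ContDiffAt ℝ 4 f 0)
    (hf0 : f 0 = 0) (hf1 : deriv f 0 = 0) (hf2 : deriv (deriv f) 0 = 1/2)
    (hfpos : ∀ᶠ t in 𝓝 (0:ℝ), 0 < deriv (deriv f) t)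
    (htp : ∀ᶠ x in 𝓝[>] (0:ℝ), 0 < tp x ∧ f (tp x) = x)
    (htm : ∀ᶠ x in 𝓝[>] (0:ℝ), tm x < 0 ∧ f (tm x) = x)
    (htp0 : Tendsto tp (𝓝[>] (0:ℝ)) (𝓝 0))
    (htm0 : Tendsto tm (𝓝[>] (0:ℝ)) (𝓝 0)) :
    Tendsto
      (fun x => (1/2 * (1 / x + 1 / (H - x))) / (2 * (1/2 * (1 / tp x - 1 / tm x)) ^ 2))
      (𝓝[>] (0:ℝ)) (𝓝 1) := by
  have hquad : Tendsto (fun t ↦ f t / t ^ 2) (𝓝[≠] 0) (𝓝 (1 / 2 / 2)) := by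
    simpa only [sub_zero, hf2] using
      tendsto_div_sq_of_contDiffAt_two (hf.of_le (by norm_num)) hf0 hf1
  convert stmt_17_general hH.ne' (by norm_num) hquad htp htm htp0 htm0 using 2
  · simp only [hilbertNorm, div_neg, sub_eq_add_neg]
  · norm_num
end
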